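/- arXiv:1408.2137 — 2 statements merged into one kernel-verified Lean document; each statement's English description precedes it below -/
import Mathlib

section
/- Let X be a zero-dimensional separable metrizable space with at least two points. If X has a dense Polish subspace then X^ω can be h-homogeneously embedded in the Cantor set 2^ω. -/
/-- A space is zero-dimensional if it has a base consisting of clopen sets. -/
def ZeroDimensional (X : Type*) [TopologicalSpace X] : Prop :=
  ∀ (x : X) (U : Set X), IsOpen U → x ∈ U → ∃ C : Set X, IsClopen C ∧ x ∈ C ∧ C ⊆ U
/-- `X` is h-homogeneously embedded in `Z` if there is a π-base `ℬ` for `Z`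
consisting of (non-empty) clopen sets, together with homeomorphisms
`φ_U : Z → U` for `U ∈ ℬ` such that `φ_U[X] = X ∩ U`. -/
def HHomEmbedded {Z : Type*} [TopologicalSpace Z] (X : Set Z) : Prop :=
  ∃ ℬ : Set (Set Z),
    (∀ U ∈ ℬ, IsClopen U ∧ U.Nonempty) ∧
    (∀ V : Set Z, IsOpen V → V.Nonempty → ∃ U ∈ ℬ, U ⊆ V) ∧
    (∀ U ∈ ℬ, ∃ φ : Z ≃ₜ U, Subtype.val '' (⇑φ '' X) = X ∩ U)

/-!
Let `K` be the closure of a copy of `X` in the Cantor set. A dense Polish subspace of `X` is a dense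
`Gδ` in `K`, so `X` is comeagre in `K` and `S = X^ω` is comeagre in `K^ω`. Freezing infinitely many
coordinates at points of `X` yields, inside every nonempty open subset of `K^ω`, a nowhere dense
copy of the pair `(K^ω, S)`. It therefore suffices to show that two compact perfect zero-dimensional
spaces `Z`, `Z'` with comeagre subsets `S`, `S'` admit a homeomorphism `Z ≃ₜ Z'` carrying `S` to
`S'`, as soon as each pair has such copies in all nonempty open subsets of the other; this is then
applied to `K^ω` and its clopen subsets.

The homeomorphism comes from a back-and-forth construction in the style of Knaster and Reichbach.
A stage consists of finite clopen partitions of `Z` and `Z'` with matched cells, together with a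
homeomorphism between closed nowhere dense sets that respects the partitions, `S` and `S'`. Cover
`Sᶜ` and `S'ᶜ` by increasing unions of closed nowhere dense sets `F n` and `F' n`. At step `n` both
partitions are refined, and the points of `F n` and `F' n` in cells containing no matched point are
matched with points of the partner cell. If a point `x` of `F n` stayed unmatched forever, each of
its later cells would contain a point matched before step `n`; such points converge to `x`, and as
the set they lie in is compact, `x` would itself be matched. Hence all points outside `S` and `S'`
are eventually matched, and the limit homeomorphism carries `S` to `S'`. Brouwer's characterization
of the Cantor set is the case where `S` and `S'` are the whole spaces.
-/

open Set Filter Topology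

section Coding

theorem ZeroDimensional.exists_isEmbedding_nat_bool {X : Type*} [TopologicalSpace X]
    [SecondCountableTopology X] [T0Space X] (hX : ZeroDimensional X) :
    ∃ ι : X → ℕ → Bool, IsEmbedding ι := by
  have hbasis : TopologicalSpace.IsTopologicalBasis {C : Set X | IsClopen C} :=
    TopologicalSpace.isTopologicalBasis_of_isOpen_of_nhds (fun C hC ↦ hC.isOpen)
      fun x U hx hU ↦ hX x U hU hx
  obtain ⟨B, hBclopen, hBcount, hB⟩ := hbasis.exists_countable
  obtain ⟨C, hC⟩ := (hBcount.insert ∅).exists_eq_range (insert_nonempty ∅ B)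
  have hCclopen (n : ℕ) : IsClopen (C n) := by
    obtain h | h := hC.symm ▸ mem_range_self n
    · exact h ▸ isClopen_empty
    · exact hBclopen h
  refine ⟨fun x n ↦ (C n).boolIndicator x, IsInducing.isEmbedding ?_⟩
  have hcont : Continuous fun x n ↦ (C n).boolIndicator x :=
    continuous_pi fun n ↦ (continuous_boolIndicator_iff_isClopen _).2 (hCclopen n)
  refine isInducing_iff_nhds.2 fun x ↦ le_antisymm hcont.continuousAt.le_comap fun U hU ↦ ?_
  obtain ⟨V, hVB, hxV, hVU⟩ := hB.mem_nhds_iff.1 hU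
  obtain ⟨n, rfl⟩ : V ∈ range C := hC ▸ mem_insert_of_mem ∅ hVB
  refine mem_comap.2 ⟨{f | f n = true}, ?_, fun y hy ↦ hVU ((mem_iff_boolIndicator _ _).2 hy)⟩
  exact ((isOpen_discrete {true}).preimage (continuous_apply n)).mem_nhds
    (mem_singleton_iff.2 ((mem_iff_boolIndicator _ _).1 hxV))

theorem exists_homeomorph_of_range_eq {Z Z' W : Type*} [TopologicalSpace Z] [CompactSpace Z]
    [TopologicalSpace Z'] [CompactSpace Z'] [TopologicalSpace W] [T2Space W]
    {f : Z → W} {g : Z' → W} (hf : Continuous f) (hg : Continuous g) (hfi : f.Injective)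
    (hgi : g.Injective) (hfg : range f = range g) :
    ∃ h : Z ≃ₜ Z', ∀ z, g (h z) = f z := by
  have hf' := (hf.isClosedEmbedding hfi).isEmbedding
  have hg' := (hg.isClosedEmbedding hgi).isEmbedding
  refine ⟨(hf'.toHomeomorph.trans (.setCongr hfg)).trans hg'.toHomeomorph.symm, fun z ↦ ?_⟩
  exact congrArg Subtype.val (hg'.toHomeomorph.apply_symm_apply ⟨f z, hfg ▸ mem_range_self z⟩)

variable {Z Z' : Type*} {σ : ℕ → Z → ℕ} {τ : ℕ → Z' → ℕ}

theorem code_eq_of_le (hst : ∀ n x y, σ (n + 1) x = τ (n + 1) y → σ n x = τ n y) {m n : ℕ}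
    (hmn : m ≤ n) {x : Z} {y : Z'} (h : σ n x = τ n y) : σ m x = τ m y := by
  induction n, hmn using Nat.le_induction with
  | base => exact h
  | succ n _ ih => exact ih (hst n x y h)

variable [TopologicalSpace Z'] [CompactSpace Z']

theorem range_code_subset (hτ : ∀ n, Continuous (τ n)) (hr : ∀ n, range (σ n) ⊆ range (τ n))
    (hst : ∀ n x y, σ (n + 1) x = τ (n + 1) y → σ n x = τ n y) :
    range (fun x n ↦ σ n x) ⊆ range (fun y n ↦ τ n y) := by
  rintro _ ⟨x, rfl⟩
  choose y hy using fun n ↦ hr n (mem_range_self x)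
  have hclosed : IsClosed (range fun y n ↦ τ n y) := (isCompact_range (continuous_pi hτ)).isClosed
  refine hclosed.mem_of_tendsto (f := fun n i ↦ τ i (y n)) (b := atTop) ?_
    (Eventually.of_forall fun n ↦ mem_range_self (y n))
  refine tendsto_pi_nhds.2 fun i ↦ tendsto_const_nhds.congr' ?_
  filter_upwards [eventually_ge_atTop i] with n hn
  exact code_eq_of_le hst hn (hy n).symm

theorem exists_homeomorph_of_codes [TopologicalSpace Z] [CompactSpace Z]
    (hσ : ∀ n, Continuous (σ n)) (hτ : ∀ n, Continuous (τ n))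
    (hr : ∀ n, range (σ n) = range (τ n))
    (hst : ∀ n x y, σ (n + 1) x = τ (n + 1) y → σ n x = τ n y)
    (hσi : ∀ x y, (∀ n, σ n x = σ n y) → x = y) (hτi : ∀ x y, (∀ n, τ n x = τ n y) → x = y) :
    ∃ h : Z ≃ₜ Z', ∀ n z, τ n (h z) = σ n z := by
  obtain ⟨h, hh⟩ := exists_homeomorph_of_range_eq (continuous_pi hσ) (continuous_pi hτ)
    (fun x y hxy ↦ hσi x y (congrFun hxy)) (fun x y hxy ↦ hτi x y (congrFun hxy))
    ((range_code_subset hτ (fun n ↦ (hr n).subset) hst).antisymm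
      (range_code_subset hσ (fun n ↦ (hr n).superset) fun n x y h ↦ (hst n y x h.symm).symm))
  exact ⟨h, fun n z ↦ congrFun (hh z) n⟩

end Coding

section Lift

theorem isNowhereDense_union {Y : Type*} [TopologicalSpace Y] {F G : Set Y}
    (hF : IsNowhereDense F) (hG : IsNowhereDense G) : IsNowhereDense (F ∪ G) := by
  rw [IsNowhereDense, closure_union,
    interior_union_isClosed_of_interior_empty isClosed_closure hG, hF]

theorem isNowhereDense_preimage {X Y : Type*} [TopologicalSpace X] [TopologicalSpace Y]
    {f : X → Y} (hf : Continuous f) (hfo : IsOpenMap f) {F : Set Y} (hF : IsNowhereDense F) :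
    IsNowhereDense (f ⁻¹' F) := by
  rw [IsNowhereDense, ← hfo.preimage_closure_eq_closure_preimage hf,
    ← hfo.preimage_interior_eq_interior_preimage hf, hF, preimage_empty]

theorem nonempty_sdiff_closure_of_isNowhereDense {Y : Type*} [TopologicalSpace Y] {U F : Set Y}
    (hU : IsOpen U) (hne : U.Nonempty) (hF : IsNowhereDense F) : (U \ closure F).Nonempty :=
  (interior_eq_empty_iff_dense_compl.1 hF).inter_open_nonempty U hU hne

theorem infinite_sdiff_of_isNowhereDense {Y : Type*} [TopologicalSpace Y] [T1Space Y]
    [PerfectSpace Y] {U F : Set Y} (hU : IsOpen U) (hne : U.Nonempty) (hF : IsNowhereDense F) :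
    (U \ F).Infinite := by
  obtain ⟨y, hy⟩ := nonempty_sdiff_closure_of_isNowhereDense hU hne hF
  exact (infinite_of_mem_nhds y ((hU.sdiff isClosed_closure).mem_nhds hy)).mono
    (sdiff_subset_sdiff_right subset_closure)

theorem exists_injective_section_of_infinite_fibers {Y I R : Type*} [Finite R] {π : R → I}
    {τ : Y → I} {F : Set Y} (hinf : ∀ r, (τ ⁻¹' {π r} \ F).Infinite) :
    ∃ y : R → Y, y.Injective ∧ ∀ r, τ (y r) = π r ∧ y r ∉ F := by
  have hfiber (i : range π) : ∃ f : R → Y, f.Injective ∧ ∀ r, f r ∈ τ ⁻¹' {i.1} \ F := by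
    obtain ⟨r, hr⟩ := i.2
    let e := (hr ▸ hinf r : (τ ⁻¹' {i.1} \ F).Infinite).natEmbedding
    exact ⟨fun r ↦ e (Finite.equivFin R r), Subtype.val_injective.comp <| e.injective.comp <|
      Fin.val_injective.comp (Finite.equivFin R).injective, fun r ↦ (e _).2⟩
  choose f hf hfmem using hfiber
  let i (r : R) : range π := ⟨π r, mem_range_self r⟩
  refine ⟨fun r ↦ f (i r) r, fun r r' h ↦ ?_, fun r ↦ hfmem (i r) r⟩
  have hi : i r = i r' := Subtype.ext <|
    (hfmem (i r) r).1.symm.trans <| (congrArg τ h).trans (hfmem (i r') r').1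
  exact hf (i r) (h.trans (by rw [hi]))

theorem exists_isLocallyConstant_of_clopen_partition {Y R : Type*} [TopologicalSpace Y]
    {C : R → Set Y} (hC : ∀ r, IsOpen (C r)) (hdisj : univ.PairwiseDisjoint C)
    (hcover : ⋃ r, C r = univ) :
    ∃ ρ : Y → R, IsLocallyConstant ρ ∧ ∀ r, ∀ y ∈ C r, ρ y = r := by
  choose ρ hρ using fun y ↦ mem_iUnion.1 (hcover.symm.subset (mem_univ y))
  have huniq (r : R) (y : Y) (hy : y ∈ C r) : ρ y = r :=
    hdisj.elim (mem_univ _) (mem_univ _) (not_disjoint_iff.2 ⟨y, hρ y, hy⟩)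
  exact ⟨ρ, (IsLocallyConstant.iff_exists_open ρ).2 fun y ↦
    ⟨C (ρ y), hC _, hρ y, fun x hx ↦ huniq _ x hx⟩, huniq⟩

theorem exists_isLocallyConstant_lift {Y I R : Type*} [TopologicalSpace Y] [CompactSpace Y]
    [T2Space Y] [TotallyDisconnectedSpace Y] [PerfectSpace Y] [Finite R] {π : R → I} {τ : Y → I}
    (hτ : IsLocallyConstant τ) (hrange : range π = range τ) {H : R → Set Y}
    (hH : ∀ r, IsClosed (H r)) (hdisj : Pairwise fun r r' ↦ Disjoint (H r) (H r'))
    (hHτ : ∀ r, ∀ y ∈ H r, τ y = π r) (hH' : IsNowhereDense (⋃ r, H r)) :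
    ∃ ρ : Y → R, IsLocallyConstant ρ ∧ ρ.Surjective ∧ (∀ y, π (ρ y) = τ y) ∧
      ∀ r, ∀ y ∈ H r, ρ y = r := by
  -- Adding a new point `y r` to each `H r` makes `ρ` surjective.
  obtain ⟨y, hyinj, hy⟩ := exists_injective_section_of_infinite_fibers (π := π) fun r ↦
    infinite_sdiff_of_isNowhereDense (hτ {π r}) (hrange.subset (mem_range_self r)) hH'
  obtain ⟨C, hC, hHC, hCτ, hcover, hCdisj⟩ := exists_clopen_partition_of_clopen_cover
    (Z := fun r ↦ {y r} ∪ H r) (D := fun r ↦ τ ⁻¹' {π r})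
    (fun r ↦ isClosed_singleton.union (hH r)) (fun r ↦ hτ.isClopen_fiber _)
    (fun r ↦ union_subset (singleton_subset_iff.2 (hy r).1) (hHτ r)) (fun r _ r' _ hr ↦ by
      have hnotMem (s t : R) : y s ∉ H t := fun h ↦ (hy s).2 (mem_iUnion_of_mem t h)
      simp only [Function.onFun, disjoint_union_left, disjoint_union_right,
        disjoint_singleton_left, disjoint_singleton_right, mem_union, mem_singleton_iff,
        hyinj.eq_iff, hnotMem, hr.symm, hdisj hr, or_false, not_false_eq_true, and_self])
  have hcover' : ⋃ r, C r = univ := eq_univ_of_univ_subset fun z _ ↦ hcover <| by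
    obtain ⟨r, hr⟩ := hrange.superset (mem_range_self z)
    exact mem_iUnion.2 ⟨r, hr.symm⟩
  obtain ⟨ρ, hρ, hρC⟩ :=
    exists_isLocallyConstant_of_clopen_partition (fun r ↦ (hC r).isOpen) hCdisj hcover'
  refine ⟨ρ, hρ, fun r ↦ ⟨y r, hρC r _ (hHC r (.inl rfl))⟩, fun z ↦ ?_,
    fun r z hz ↦ hρC r z (hHC r (.inr hz))⟩
  obtain ⟨r, hr⟩ := mem_iUnion.1 (hcover'.symm.subset (mem_univ z))
  rw [hρC r z hr, hCτ r hr]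

end Lift

section Matching

variable {Z Z' : Type*} [TopologicalSpace Z] [TopologicalSpace Z']

/-- A partial homeomorphism between closed nowhere dense subsets of `Z` and `Z'` that carries
membership in `S` to membership in `S'`, encoded by its graph `Γ`. -/
structure IsPartialMatching (S : Set Z) (S' : Set Z') (Γ : Set (Z × Z')) : Prop where
  isClosed : IsClosed Γ
  injOn_fst : InjOn Prod.fst Γ
  injOn_snd : InjOn Prod.snd Γ
  isNowhereDense_fst : IsNowhereDense (Prod.fst '' Γ)
  isNowhereDense_snd : IsNowhereDense (Prod.snd '' Γ)
  mem_iff : ∀ p ∈ Γ, p.1 ∈ S ↔ p.2 ∈ S'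

/-- Every nonempty open subset of `Z'` contains a nowhere dense image of `Z` under an injective
continuous map that carries membership in `S` to membership in `S'`. -/
def EmbedsInEveryOpen (S : Set Z) (S' : Set Z') : Prop :=
  ∀ U : Set Z', IsOpen U → U.Nonempty → ∃ e : Z → Z', Continuous e ∧ e.Injective ∧ range e ⊆ U ∧
    IsNowhereDense (range e) ∧ ∀ x, x ∈ S ↔ e x ∈ S'

/-- `F` is a closed nowhere dense subset of `Z` all of whose points can be matched inside any
given nonempty open subset of `Z'`, respecting `S` and `S'`. -/
structure IsAbsorbed (S : Set Z) (S' : Set Z') (F : Set Z) : Prop where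
  isClosed : IsClosed F
  isNowhereDense : IsNowhereDense F
  embedsInEveryOpen : EmbedsInEveryOpen ((↑) ⁻¹' S : Set F) S'

variable {S : Set Z} {S' : Set Z'} {Γ Γ₁ Γ₂ : Set (Z × Z')} {F : Set Z} {F' : Set Z'}

namespace IsPartialMatching

theorem empty : IsPartialMatching S S' ∅ where
  isClosed := isClosed_empty
  injOn_fst := injOn_empty _
  injOn_snd := injOn_empty _
  isNowhereDense_fst := by rw [image_empty]; exact isNowhereDense_empty
  isNowhereDense_snd := by rw [image_empty]; exact isNowhereDense_empty
  mem_iff _ hp := hp.elim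

theorem symm (h : IsPartialMatching S S' Γ) : IsPartialMatching S' S (Prod.swap ⁻¹' Γ) where
  isClosed := h.isClosed.preimage continuous_swap
  injOn_fst _ hp _ hq hpq := Prod.swap_injective (h.injOn_snd hp hq hpq)
  injOn_snd _ hp _ hq hpq := Prod.swap_injective (h.injOn_fst hp hq hpq)
  isNowhereDense_fst := by
    rw [← image_swap_eq_preimage_swap, image_image]; exact h.isNowhereDense_snd
  isNowhereDense_snd := by
    rw [← image_swap_eq_preimage_swap, image_image]; exact h.isNowhereDense_fst
  mem_iff p hp := (h.mem_iff p.swap hp).symm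

theorem union (h₁ : IsPartialMatching S S' Γ₁) (h₂ : IsPartialMatching S S' Γ₂)
    (hfst : Disjoint (Prod.fst '' Γ₁) (Prod.fst '' Γ₂))
    (hsnd : Disjoint (Prod.snd '' Γ₁) (Prod.snd '' Γ₂)) : IsPartialMatching S S' (Γ₁ ∪ Γ₂) where
  isClosed := h₁.isClosed.union h₂.isClosed
  injOn_fst := (injOn_union hfst.of_image).2 ⟨h₁.injOn_fst, h₂.injOn_fst, fun _ hp _ hq ↦
    hfst.ne_of_mem (mem_image_of_mem _ hp) (mem_image_of_mem _ hq)⟩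
  injOn_snd := (injOn_union hfst.of_image).2 ⟨h₁.injOn_snd, h₂.injOn_snd, fun _ hp _ hq ↦
    hsnd.ne_of_mem (mem_image_of_mem _ hp) (mem_image_of_mem _ hq)⟩
  isNowhereDense_fst := by
    rw [image_union]; exact isNowhereDense_union h₁.isNowhereDense_fst h₂.isNowhereDense_fst
  isNowhereDense_snd := by
    rw [image_union]; exact isNowhereDense_union h₁.isNowhereDense_snd h₂.isNowhereDense_snd
  mem_iff p hp := hp.elim (h₁.mem_iff p) (h₂.mem_iff p)

theorem exists_lift [CompactSpace Z] [CompactSpace Z'] [T2Space Z']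
    [TotallyDisconnectedSpace Z'] [PerfectSpace Z'] (h : IsPartialMatching S S' Γ) {σ : Z → ℕ}
    {τ : Z' → ℕ} {π : ℕ → ℕ} (hσ : Continuous σ) (hτ : Continuous τ)
    (hrange : range (fun x ↦ π (σ x)) = range τ) (hΓ : ∀ p ∈ Γ, π (σ p.1) = τ p.2) :
    ∃ ρ : Z' → ℕ, Continuous ρ ∧ range ρ = range σ ∧ (∀ y, π (ρ y) = τ y) ∧
      ∀ p ∈ Γ, ρ p.2 = σ p.1 := by
  have : Finite (range σ) := ((IsLocallyConstant.iff_continuous σ).2 hσ).range_finite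
  let H (r : range σ) : Set Z' := Prod.snd '' (Γ ∩ (fun p ↦ σ p.1) ⁻¹' {r.1})
  have hclosed (r) : IsClosed (H r) :=
    ((h.isClosed.inter (isClosed_singleton.preimage (hσ.comp continuous_fst))).isCompact.image
      continuous_snd).isClosed
  have hdisj : Pairwise fun r r' ↦ Disjoint (H r) (H r') := by
    refine fun r r' hr ↦ disjoint_left.2 ?_
    rintro _ ⟨p, ⟨hp, hpr⟩, rfl⟩ ⟨q, ⟨hq, hqr⟩, hqp⟩
    exact hr (Subtype.ext (hpr.symm.trans (h.injOn_snd hq hp hqp ▸ hqr)))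
  have hHτ (r) : ∀ y ∈ H r, τ y = π r.1 := by
    rintro _ ⟨p, ⟨hp, hpr⟩, rfl⟩
    exact (hΓ p hp).symm.trans (congrArg π hpr)
  have hH' : IsNowhereDense (⋃ r, H r) :=
    h.isNowhereDense_snd.mono (iUnion_subset fun r ↦ image_mono inter_subset_left)
  have hrange' : range (fun r : range σ ↦ π r.1) = range τ := by
    rw [← hrange, range_comp' π, Subtype.range_coe, ← range_comp']
  obtain ⟨ρ, hρ, hρsurj, hρτ, hρH⟩ := exists_isLocallyConstant_lift
    ((IsLocallyConstant.iff_continuous τ).2 hτ) hrange' hclosed hdisj hHτ hH'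
  exact ⟨fun y ↦ ρ y, continuous_subtype_val.comp hρ.continuous,
    (hρsurj.range_comp Subtype.val).trans Subtype.range_coe, hρτ,
    fun p hp ↦ congrArg Subtype.val (hρH ⟨σ p.1, mem_range_self _⟩ p.2 ⟨p, ⟨hp, rfl⟩, rfl⟩)⟩

end IsPartialMatching

namespace EmbedsInEveryOpen

theorem comp {Y : Type*} [TopologicalSpace Y] (h : EmbedsInEveryOpen S S') {f : Y → Z}
    (hf : Continuous f) (hinj : f.Injective) : EmbedsInEveryOpen (f ⁻¹' S) S' := by
  intro U hU hne
  obtain ⟨e, he, heinj, heU, hnd, hmem⟩ := h U hU hne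
  have hrange : range (e ∘ f) ⊆ range e := range_comp_subset_range f e
  exact ⟨e ∘ f, he.comp hf, heinj.comp hinj, hrange.trans heU, hnd.mono hrange,
    fun y ↦ hmem (f y)⟩

theorem codRestrict (h : EmbedsInEveryOpen S S') {V : Set Z'} (hV : IsOpen V) :
    EmbedsInEveryOpen S ((↑) ⁻¹' S' : Set V) := by
  intro U hU hne
  obtain ⟨e, he, heinj, heU, hnd, hmem⟩ :=
    h (Subtype.val '' U) (hV.isOpenMap_subtype_val U hU) (hne.image _)
  have heV (x : Z) : e x ∈ V := Subtype.coe_image_subset V U (heU (mem_range_self x))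
  have hval : range (V.codRestrict e heV) = Subtype.val ⁻¹' range e := by
    ext y
    simp only [mem_range, mem_preimage, Subtype.ext_iff, val_codRestrict_apply]
  refine ⟨V.codRestrict e heV, he.codRestrict heV, heinj.codRestrict heV, ?_, ?_, hmem⟩
  · rw [hval, ← preimage_image_eq U Subtype.val_injective]
    exact preimage_mono heU
  · rw [hval]
    exact isNowhereDense_preimage continuous_subtype_val hV.isOpenMap_subtype_val hnd

end EmbedsInEveryOpen

namespace IsAbsorbed

theorem empty : IsAbsorbed S S' ∅ where
  isClosed := isClosed_empty
  isNowhereDense := isNowhereDense_empty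
  embedsInEveryOpen _ _ _ := ⟨isEmptyElim, continuous_of_discreteTopology,
    Function.injective_of_subsingleton _, by simp only [range_eq_empty, empty_subset],
    by rw [range_eq_empty]; exact isNowhereDense_empty, isEmptyElim⟩

theorem mono {F₁ : Set Z} (h : IsAbsorbed S S' F) (hF₁ : IsClosed F₁) (hsub : F₁ ⊆ F) :
    IsAbsorbed S S' F₁ where
  isClosed := hF₁
  isNowhereDense := h.isNowhereDense.mono hsub
  embedsInEveryOpen :=
    h.embedsInEveryOpen.comp (continuous_inclusion hsub) (inclusion_injective hsub)

theorem exists_isPartialMatching [CompactSpace Z] [T2Space Z] [T2Space Z']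
    (h : IsAbsorbed S S' F) {U : Set Z'} (hU : IsOpen U) (hne : U.Nonempty) :
    ∃ Γ, IsPartialMatching S S' Γ ∧ Prod.fst '' Γ = F ∧ Prod.snd '' Γ ⊆ U := by
  obtain ⟨e, he, hinj, heU, hnd, hmem⟩ := h.embedsInEveryOpen U hU hne
  have := isCompact_iff_compactSpace.1 h.isClosed.isCompact
  have hfst : Prod.fst '' range (fun x : F ↦ (x.1, e x)) = F := by
    rw [← range_comp]; exact Subtype.range_coe
  have hsnd : Prod.snd '' range (fun x : F ↦ (x.1, e x)) = range e := (range_comp _ _).symm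
  refine ⟨range fun x : F ↦ (x.1, e x), ⟨?_, ?_, ?_, ?_, ?_, ?_⟩, hfst, hsnd ▸ heU⟩
  · exact (isCompact_range (continuous_subtype_val.prodMk he)).isClosed
  · rintro _ ⟨x, rfl⟩ _ ⟨y, rfl⟩ hxy
    rw [Subtype.ext hxy]
  · rintro _ ⟨x, rfl⟩ _ ⟨y, rfl⟩ hxy
    rw [hinj hxy]
  · exact hfst.symm ▸ h.isNowhereDense
  · exact hsnd.symm ▸ hnd
  · rintro _ ⟨x, rfl⟩
    exact hmem x

variable [CompactSpace Z] [T2Space Z] [CompactSpace Z'] [T2Space Z']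

theorem exists_isPartialMatching_of_isClopen (hF : IsAbsorbed S S' F) (hF' : IsAbsorbed S' S F')
    {A : Set Z} {B : Set Z'} (hA : IsClopen A) (hB : IsClopen B) (hA' : A.Nonempty)
    (hB' : B.Nonempty) :
    ∃ Γ, IsPartialMatching S S' Γ ∧ Γ ⊆ A ×ˢ B ∧ F ∩ A ⊆ Prod.fst '' Γ ∧
      F' ∩ B ⊆ Prod.snd '' Γ := by
  have hAF : (A \ F).Nonempty :=
    hF.isClosed.closure_eq ▸
      nonempty_sdiff_closure_of_isNowhereDense hA.isOpen hA' hF.isNowhereDense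
  have hBF' : (B \ F').Nonempty :=
    hF'.isClosed.closure_eq ▸
      nonempty_sdiff_closure_of_isNowhereDense hB.isOpen hB' hF'.isNowhereDense
  obtain ⟨Γ, hΓ, hfst, hsnd⟩ :=
    (hF.mono (hF.isClosed.inter hA.isClosed) inter_subset_left).exists_isPartialMatching
      (hB.isOpen.sdiff hF'.isClosed) hBF'
  obtain ⟨Δ, hΔ, hfst', hsnd'⟩ :=
    (hF'.mono (hF'.isClosed.inter hB.isClosed) inter_subset_left).exists_isPartialMatching
      (hA.isOpen.sdiff hF.isClosed) hAF
  have hfst_swap : Prod.fst '' (Prod.swap ⁻¹' Δ) = Prod.snd '' Δ := by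
    rw [← image_swap_eq_preimage_swap, image_image]; rfl
  have hsnd_swap : Prod.snd '' (Prod.swap ⁻¹' Δ) = Prod.fst '' Δ := by
    rw [← image_swap_eq_preimage_swap, image_image]; rfl
  refine ⟨Γ ∪ Prod.swap ⁻¹' Δ, hΓ.union hΔ.symm ?_ ?_, ?_, ?_, ?_⟩
  · rw [hfst, hfst_swap]
    exact (disjoint_sdiff_right.mono_left inter_subset_left).mono_right hsnd'
  · rw [hsnd_swap, hfst']
    exact (disjoint_sdiff_left.mono_left hsnd).mono_right inter_subset_left
  · rintro p (hp | hp)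
    · exact ⟨(hfst.subset (mem_image_of_mem _ hp)).2, (hsnd (mem_image_of_mem _ hp)).1⟩
    · exact ⟨(hsnd' (mem_image_of_mem _ hp)).1, (hfst'.subset (mem_image_of_mem _ hp)).2⟩
  · rw [image_union, hfst]
    exact subset_union_left
  · rw [image_union, hsnd_swap, hfst']
    exact subset_union_right

theorem exists_isPartialMatching_of_codes {c : Z → ℕ} {c' : Z' → ℕ} (hF : IsAbsorbed S S' F)
    (hF' : IsAbsorbed S' S F') (hc : Continuous c) (hc' : Continuous c') (T : Finset ℕ)
    (hT : ↑T ⊆ range c) (hT' : ↑T ⊆ range c') :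
    ∃ Γ, IsPartialMatching S S' Γ ∧ (∀ p ∈ Γ, c p.1 = c' p.2 ∧ c p.1 ∈ T) ∧
      F ∩ c ⁻¹' T ⊆ Prod.fst '' Γ ∧ F' ∩ c' ⁻¹' T ⊆ Prod.snd '' Γ := by
  induction T using Finset.induction_on with
  | empty => exact ⟨∅, .empty, by simp⟩
  | insert a T ha ih =>
    rw [Finset.coe_insert, insert_subset_iff] at hT hT'
    obtain ⟨Γ, hΓ, hΓT, hcov, hcov'⟩ := ih hT.2 hT'.2
    obtain ⟨Δ, hΔ, hΔa, hcova, hcova'⟩ := hF.exists_isPartialMatching_of_isClopen hF'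
      ((isClopen_discrete {a}).preimage hc) ((isClopen_discrete {a}).preimage hc') hT.1 hT'.1
    have hΔc (p) (hp : p ∈ Δ) : c p.1 = a ∧ c' p.2 = a := hΔa hp
    refine ⟨Δ ∪ Γ, hΔ.union hΓ (disjoint_left.2 ?_) (disjoint_left.2 ?_), ?_, ?_, ?_⟩
    · rintro _ ⟨p, hp, rfl⟩ ⟨q, hq, hqp⟩
      exact ha ((hΔc p hp).1 ▸ hqp ▸ (hΓT q hq).2)
    · rintro _ ⟨p, hp, rfl⟩ ⟨q, hq, hqp⟩
      exact ha ((hΔc p hp).2 ▸ hqp ▸ (hΓT q hq).1 ▸ (hΓT q hq).2)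
    · rintro p (hp | hp)
      · exact ⟨(hΔc p hp).1.trans (hΔc p hp).2.symm,
          (hΔc p hp).1 ▸ Finset.mem_insert_self a T⟩
      · exact ⟨(hΓT p hp).1, Finset.mem_insert_of_mem (hΓT p hp).2⟩
    · rw [Finset.coe_insert, insert_eq, preimage_union, inter_union_distrib_left, image_union]
      exact union_subset_union hcova hcov
    · rw [Finset.coe_insert, insert_eq, preimage_union, inter_union_distrib_left, image_union]
      exact union_subset_union hcova' hcov'

end IsAbsorbed

end Matching

section BackAndForth

variable {Z Z' : Type*} [TopologicalSpace Z] [TopologicalSpace Z']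

/-- A finite approximation to a homeomorphism `Z ≃ₜ Z'` carrying `S` to `S'`: clopen partitions of
`Z` and `Z'` whose cells are matched by carrying the same label in `ℕ`, together with a partial
matching, with graph `graph`, that relates only points of matched cells. -/
structure Stage (S : Set Z) (S' : Set Z') where
  code : Z → ℕ
  code' : Z' → ℕ
  graph : Set (Z × Z')
  continuous_code : Continuous code
  continuous_code' : Continuous code'
  range_code : range code = range code'
  isPartialMatching : IsPartialMatching S S' graph
  code_eq_of_mem : ∀ p ∈ graph, code p.1 = code' p.2

variable {S : Set Z} {S' : Set Z'}

namespace Stage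

/-- The same approximation, read from `Z'` to `Z`. -/
def symm (s : Stage S S') : Stage S' S where
  code := s.code'
  code' := s.code
  graph := Prod.swap ⁻¹' s.graph
  continuous_code := s.continuous_code'
  continuous_code' := s.continuous_code
  range_code := s.range_code.symm
  isPartialMatching := s.isPartialMatching.symm
  code_eq_of_mem p hp := (s.code_eq_of_mem p.swap hp).symm

/-- The coarsest approximation: a single cell on each side and no matched points. -/
def coarsest [Nonempty Z] [Nonempty Z'] (S : Set Z) (S' : Set Z') : Stage S S' where
  code _ := 0
  code' _ := 0
  graph := ∅
  continuous_code := continuous_const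
  continuous_code' := continuous_const
  range_code := by rw [range_const, range_const]
  isPartialMatching := .empty
  code_eq_of_mem _ hp := hp.elim

/-- `t.Refines s`: the partitions of `t` are finer than those of `s`, compatibly with the matching
of cells, and the partial matching of `t` extends that of `s`. -/
structure Refines (t s : Stage S S') : Prop where
  graph_subset : s.graph ⊆ t.graph
  code_eq : ∀ x y, t.code x = t.code' y → s.code x = s.code' y

variable {s t u : Stage S S'}

namespace Refines

theorem symm (h : t.Refines s) : t.symm.Refines s.symm where
  graph_subset _ hp := h.graph_subset hp
  code_eq x y hxy := (h.code_eq y x hxy.symm).symm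

theorem trans (h₁ : u.Refines t) (h₂ : t.Refines s) : u.Refines s where
  graph_subset := h₂.graph_subset.trans h₁.graph_subset
  code_eq x y hxy := h₂.code_eq x y (h₁.code_eq x y hxy)

theorem code_eq_left (h : t.Refines s) {x x' : Z} (hx : t.code x = t.code x') :
    s.code x = s.code x' := by
  obtain ⟨y, hy⟩ := t.range_code.subset (mem_range_self x)
  exact (h.code_eq x y hy.symm).trans (h.code_eq x' y (hx.symm.trans hy.symm)).symm

end Refines

theorem exists_refines_code_eq [CompactSpace Z] [CompactSpace Z'] [T2Space Z']
    [TotallyDisconnectedSpace Z'] [PerfectSpace Z'] (s : Stage S S') {c : Z → ℕ}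
    (hc : Continuous c) :
    ∃ t : Stage S S', t.Refines s ∧ t.graph = s.graph ∧
      ∀ x x', t.code x = t.code x' → c x = c x' := by
  have hσ : Continuous fun x ↦ Nat.pair (s.code x) (c x) :=
    (continuous_of_discreteTopology (f := fun p : ℕ × ℕ ↦ Nat.pair p.1 p.2)).comp
      (s.continuous_code.prodMk hc)
  have hfst (x : Z) : (Nat.pair (s.code x) (c x)).unpair.1 = s.code x := by rw [Nat.unpair_pair]
  obtain ⟨ρ, hρ, hρσ, hρs, hρgraph⟩ := s.isPartialMatching.exists_lift
    (π := fun k ↦ k.unpair.1) hσ s.continuous_code' (by simp only [hfst, s.range_code])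
    (fun p hp ↦ (hfst p.1).trans (s.code_eq_of_mem p hp))
  refine ⟨⟨_, ρ, s.graph, hσ, hρ, hρσ.symm, s.isPartialMatching, fun p hp ↦ (hρgraph p hp).symm⟩,
    ⟨Subset.rfl, fun x y hxy ↦ ?_⟩, rfl, fun x x' hx ↦ (Nat.pair_eq_pair.1 hx).2⟩
  rw [← hfst x, ← hρs y]
  exact congrArg (fun k ↦ k.unpair.1) hxy

/-- `s.Step t c c' F F'`: one round of the back-and-forth from `s` to `t`. The new cells are
small enough to decide the labels `c` and `c'`, points are matched only within cells that do not
meet the old matching, and `F` and `F'` are matched completely within these fresh cells. -/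
structure Step (s t : Stage S S') (c : Z → ℕ) (c' : Z' → ℕ) (F : Set Z) (F' : Set Z') : Prop
    extends t.Refines s where
  fresh : ∀ p ∈ t.graph, ∀ q ∈ s.graph, t.code p.1 = t.code q.1 → p ∈ s.graph
  decides : ∀ x x', t.code x = t.code x' → c x = c x'
  decides' : ∀ y y', t.code' y = t.code' y' → c' y = c' y'
  covers : ∀ x ∈ F, x ∈ Prod.fst '' t.graph ∨ ∃ p ∈ s.graph, t.code p.1 = t.code x
  covers' : ∀ y ∈ F', y ∈ Prod.snd '' t.graph ∨ ∃ p ∈ s.graph, t.code' p.2 = t.code' y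

variable {c : Z → ℕ} {c' : Z' → ℕ} {F : Set Z} {F' : Set Z'}

theorem Step.symm (h : s.Step t c c' F F') : s.symm.Step t.symm c' c F' F where
  toRefines := h.toRefines.symm
  fresh p hp q hq hpq := h.fresh p.swap hp q.swap hq <|
    (t.code_eq_of_mem _ hp).trans (hpq.trans (t.code_eq_of_mem _ (h.graph_subset hq)).symm)
  decides := h.decides'
  decides' := h.decides
  covers y hy := (h.covers' y hy).imp (fun ⟨p, hp, hpy⟩ ↦ ⟨p.swap, hp, hpy⟩)
    fun ⟨p, hp, hpy⟩ ↦ ⟨p.swap, hp, hpy⟩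
  covers' x hx := (h.covers x hx).imp (fun ⟨p, hp, hpx⟩ ↦ ⟨p.swap, hp, hpx⟩)
    fun ⟨p, hp, hpx⟩ ↦ ⟨p.swap, hp, hpx⟩

section Compact

variable [CompactSpace Z] [T2Space Z] [CompactSpace Z'] [T2Space Z']

theorem exists_isPartialMatching_of_fresh (s : Stage S S') (hF : IsAbsorbed S S' F)
    (hF' : IsAbsorbed S' S F') :
    ∃ Γ, IsPartialMatching S S' Γ ∧ (∀ p ∈ Γ, s.code p.1 = s.code' p.2) ∧
      (∀ p ∈ Γ, ∀ q ∈ s.graph, s.code p.1 ≠ s.code q.1) ∧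
      (∀ x ∈ F, x ∈ Prod.fst '' Γ ∨ ∃ p ∈ s.graph, s.code p.1 = s.code x) ∧
      ∀ y ∈ F', y ∈ Prod.snd '' Γ ∨ ∃ p ∈ s.graph, s.code' p.2 = s.code' y := by
  have hfin : (range s.code \ (fun p ↦ s.code p.1) '' s.graph).Finite :=
    ((IsLocallyConstant.iff_continuous _).2 s.continuous_code).range_finite.sdiff
  have hT : ↑hfin.toFinset ⊆ range s.code := by
    rw [hfin.coe_toFinset]
    exact sdiff_subset
  obtain ⟨Γ, hΓ, hΓT, hcov, hcov'⟩ := hF.exists_isPartialMatching_of_codes hF' s.continuous_code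
    s.continuous_code' hfin.toFinset hT (s.range_code ▸ hT)
  rw [hfin.coe_toFinset] at hcov hcov'
  refine ⟨Γ, hΓ, fun p hp ↦ (hΓT p hp).1, fun p hp q hq hpq ↦ ?_, fun x hx ↦ ?_, fun y hy ↦ ?_⟩
  · exact (hfin.mem_toFinset.1 (hΓT p hp).2).2 ⟨q, hq, hpq.symm⟩
  · by_cases h : s.code x ∈ (fun p ↦ s.code p.1) '' s.graph
    · exact .inr h
    · exact .inl (hcov ⟨hx, mem_range_self x, h⟩)
  · by_cases h : s.code' y ∈ (fun p ↦ s.code p.1) '' s.graph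
    · obtain ⟨p, hp, hpy⟩ := h
      exact .inr ⟨p, hp, (s.code_eq_of_mem p hp).symm.trans hpy⟩
    · exact .inl (hcov' ⟨hy, s.range_code.symm.subset (mem_range_self y), h⟩)

variable [TotallyDisconnectedSpace Z] [PerfectSpace Z] [TotallyDisconnectedSpace Z']
  [PerfectSpace Z']

theorem exists_step (s : Stage S S') (hc : Continuous c) (hc' : Continuous c')
    (hF : IsAbsorbed S S' F) (hF' : IsAbsorbed S' S F') : ∃ t, s.Step t c c' F F' := by
  obtain ⟨u, hus, hgu, huc⟩ := s.exists_refines_code_eq hc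
  obtain ⟨v', hvu', hgv', hvc'⟩ := u.symm.exists_refines_code_eq hc'
  obtain ⟨v, rfl⟩ : ∃ v : Stage S S', v.symm = v' := ⟨v'.symm, rfl⟩
  have hvu : v.Refines u := hvu'.symm
  have hgraph : v.graph = s.graph := by
    rw [← hgu]
    exact Prod.swap_surjective.preimage_injective hgv'
  obtain ⟨Γ, hΓ, hΓcode, hfresh, hcov, hcov'⟩ := v.exists_isPartialMatching_of_fresh hF hF'
  have hfst : Disjoint (Prod.fst '' v.graph) (Prod.fst '' Γ) := disjoint_left.2 <| by
    rintro _ ⟨q, hq, rfl⟩ ⟨p, hp, hpq⟩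
    exact hfresh p hp q hq (congrArg v.code hpq)
  have hsnd : Disjoint (Prod.snd '' v.graph) (Prod.snd '' Γ) := disjoint_left.2 <| by
    rintro _ ⟨q, hq, rfl⟩ ⟨p, hp, hpq⟩
    refine hfresh p hp q hq ?_
    rw [hΓcode p hp, v.code_eq_of_mem q hq, hpq]
  rw [hgraph] at hcov hcov' hfresh
  refine ⟨{ v with
    graph := v.graph ∪ Γ
    isPartialMatching := v.isPartialMatching.union hΓ hfst hsnd
    code_eq_of_mem := fun p hp ↦ hp.elim (v.code_eq_of_mem p) (hΓcode p) }, ?_, ?_, ?_, ?_, ?_, ?_⟩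
  · exact ⟨hgraph ▸ subset_union_left, (hvu.trans hus).code_eq⟩
  · rintro p (hp | hp) q hq hpq
    · exact hgraph ▸ hp
    · exact (hfresh p hp q hq hpq).elim
  · exact fun x x' hx ↦ huc x x' (hvu.code_eq_left hx)
  · exact hvc'
  · exact fun x hx ↦ (hcov x hx).imp_left fun h ↦ image_mono subset_union_right h
  · exact fun y hy ↦ (hcov' y hy).imp_left fun h ↦ image_mono subset_union_right h

theorem exists_seq_step [Nonempty Z] [Nonempty Z'] {c : ℕ → Z → ℕ} {c' : ℕ → Z' → ℕ}
    {F : ℕ → Set Z} {F' : ℕ → Set Z'} (hc : ∀ n, Continuous (c n)) (hc' : ∀ n, Continuous (c' n))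
    (hF : ∀ n, IsAbsorbed S S' (F n)) (hF' : ∀ n, IsAbsorbed S' S (F' n)) :
    ∃ s : ℕ → Stage S S', ∀ n, (s n).Step (s (n + 1)) (c n) (c' n) (F n) (F' n) := by
  choose next hnext using fun n (s : Stage S S') ↦ s.exists_step (hc n) (hc' n) (hF n) (hF' n)
  exact ⟨Nat.rec (coarsest S S') next, fun n ↦ hnext n _⟩

end Compact

section Sequence

variable {s : ℕ → Stage S S'} {c : ℕ → Z → ℕ} {c' : ℕ → Z' → ℕ} {F : ℕ → Set Z}
  {F' : ℕ → Set Z'}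

theorem refines_of_le (hs : ∀ n, (s n).Step (s (n + 1)) (c n) (c' n) (F n) (F' n)) {m n : ℕ}
    (hmn : m ≤ n) : (s n).Refines (s m) := by
  induction n, hmn using Nat.le_induction with
  | base => exact ⟨Subset.rfl, fun _ _ h ↦ h⟩
  | succ n _ ih => exact (hs n).toRefines.trans ih

theorem eq_of_code_eq (hs : ∀ n, (s n).Step (s (n + 1)) (c n) (c' n) (F n) (F' n))
    (hsep : ∀ x y, (∀ n, c n x = c n y) → x = y) {m : ℕ} {x y : Z}
    (h : ∀ n, m ≤ n → (s n).code x = (s n).code y) : x = y :=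
  hsep x y fun n ↦ (hs n).decides x y <|
    (refines_of_le hs (le_max_right m (n + 1))).code_eq_left (h _ (le_max_left _ _))

theorem mem_graph_of_forall_notMem (hs : ∀ n, (s n).Step (s (n + 1)) (c n) (c' n) (F n) (F' n))
    (hF : Monotone F) {m : ℕ} {x : Z} (hx : x ∈ F m) (hnot : ∀ n, x ∉ Prod.fst '' (s n).graph)
    {n : ℕ} (hmn : m ≤ n) {p : Z × Z'} (hp : p ∈ (s n).graph)
    (hpx : (s n).code p.1 = (s n).code x) : p ∈ (s m).graph := by
  induction n, hmn using Nat.le_induction with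
  | base => exact hp
  | succ n hn ih =>
    obtain ⟨q, hq, hqx⟩ := ((hs n).covers x (hF hn hx)).resolve_left (hnot _)
    exact ih ((hs n).fresh p hp q hq (hpx.trans hqx.symm)) ((hs n).code_eq_left hpx)

theorem exists_mem_fst_image_graph [CompactSpace Z] [CompactSpace Z']
    (hs : ∀ n, (s n).Step (s (n + 1)) (c n) (c' n) (F n) (F' n))
    (hsep : ∀ x y, (∀ n, c n x = c n y) → x = y) (hF : Monotone F) {m : ℕ} {x : Z}
    (hx : x ∈ F m) : ∃ n, x ∈ Prod.fst '' (s n).graph := by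
  by_contra! hnot
  let K (k : ℕ) : Set (Z × Z') :=
    (s m).graph ∩ (fun p ↦ (s (m + k)).code p.1) ⁻¹' {(s (m + k)).code x}
  have hclosed (k) : IsClosed (K k) := (s m).isPartialMatching.isClosed.inter <|
    isClosed_singleton.preimage ((s _).continuous_code.comp continuous_fst)
  have hanti (k) : K (k + 1) ⊆ K k := fun p hp ↦ ⟨hp.1, (hs (m + k)).code_eq_left hp.2⟩
  have hne (k) : (K k).Nonempty := by
    obtain ⟨q, hq, hqx⟩ := ((hs (m + k)).covers x (hF le_self_add hx)).resolve_left (hnot _)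
    have hqx' := (hs (m + k)).code_eq_left hqx
    exact ⟨q, mem_graph_of_forall_notMem hs hF hx hnot le_self_add hq hqx', hqx'⟩
  obtain ⟨p, hp⟩ := IsCompact.nonempty_iInter_of_sequence_nonempty_isCompact_isClosed K hanti hne
    (hclosed 0).isCompact hclosed
  rw [mem_iInter] at hp
  refine hnot m ⟨p, (hp 0).1, eq_of_code_eq hs hsep (m := m) fun n hn ↦ ?_⟩
  obtain ⟨k, rfl⟩ := Nat.exists_eq_add_of_le hn
  exact (hp k).2

theorem exists_homeomorph_of_step [CompactSpace Z] [CompactSpace Z']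
    (hs : ∀ n, (s n).Step (s (n + 1)) (c n) (c' n) (F n) (F' n))
    (hsep : ∀ x y, (∀ n, c n x = c n y) → x = y)
    (hsep' : ∀ x y, (∀ n, c' n x = c' n y) → x = y) :
    ∃ h : Z ≃ₜ Z', ∀ n, ∀ p ∈ (s n).graph, h p.1 = p.2 := by
  have hs' (n) := (hs n).symm
  obtain ⟨h, hh⟩ := exists_homeomorph_of_codes (fun n ↦ (s n).continuous_code)
    (fun n ↦ (s n).continuous_code') (fun n ↦ (s n).range_code) (fun n ↦ (hs n).code_eq)
    (fun x y hxy ↦ eq_of_code_eq hs hsep (m := 0) fun n _ ↦ hxy n)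
    (fun x y hxy ↦ eq_of_code_eq hs' hsep' (m := 0) fun n _ ↦ hxy n)
  refine ⟨h, fun m p hp ↦ eq_of_code_eq hs' hsep' (m := m) fun n hn ↦ ?_⟩
  exact (hh n p.1).trans ((s n).code_eq_of_mem p ((refines_of_le hs hn).graph_subset hp))

end Sequence

end Stage

end BackAndForth

section Homeomorphism

theorem zeroDimensional_of_compactSpace (Z : Type*) [TopologicalSpace Z] [CompactSpace Z]
    [T2Space Z] [TotallyDisconnectedSpace Z] : ZeroDimensional Z :=
  fun _ _ hU hx ↦ compact_exists_isClopen_in_isOpen hU hx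

theorem perfectSpace_of_isOpen {Y : Type*} [TopologicalSpace Y] [PerfectSpace Y] {U : Set Y}
    (hU : IsOpen U) : PerfectSpace U := by
  refine perfectSpace_iff_forall_not_isolated.2 fun x ↦ neBot_iff.2 fun hx ↦ ?_
  have hx' := hU.isOpenMap_subtype_val {x} ((isOpen_singleton_iff_punctured_nhds x).2 hx)
  rw [image_singleton, isOpen_singleton_iff_punctured_nhds] at hx'
  exact (PerfectSpace.not_isolated x.1).ne hx'

theorem exists_separating_codes (Z : Type*) [TopologicalSpace Z] [CompactSpace Z] [T2Space Z]
    [TotallyDisconnectedSpace Z] [SecondCountableTopology Z] :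
    ∃ c : ℕ → Z → ℕ, (∀ n, Continuous (c n)) ∧ ∀ x y, (∀ n, c n x = c n y) → x = y := by
  obtain ⟨ι, hι⟩ := (zeroDimensional_of_compactSpace Z).exists_isEmbedding_nat_bool
  have hinj : Function.Injective Bool.toNat := by decide
  exact ⟨fun n x ↦ (ι x n).toNat,
    fun n ↦ (continuous_of_discreteTopology (f := Bool.toNat)).comp
      ((continuous_apply n).comp hι.continuous),
    fun x y h ↦ hι.injective (funext fun n ↦ hinj (h n))⟩

variable {Z Z' : Type*} [TopologicalSpace Z] [CompactSpace Z] [T2Space Z]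
  [TotallyDisconnectedSpace Z] [SecondCountableTopology Z] [PerfectSpace Z] [Nonempty Z]
  [TopologicalSpace Z'] [CompactSpace Z'] [T2Space Z'] [TotallyDisconnectedSpace Z']
  [SecondCountableTopology Z'] [PerfectSpace Z'] [Nonempty Z'] {S : Set Z} {S' : Set Z'}

theorem exists_homeomorph_mem_iff_of_isAbsorbed {F : ℕ → Set Z} {F' : ℕ → Set Z'}
    (hF : ∀ n, IsAbsorbed S S' (F n)) (hF' : ∀ n, IsAbsorbed S' S (F' n)) (hmono : Monotone F)
    (hmono' : Monotone F') (hcover : Sᶜ ⊆ ⋃ n, F n) (hcover' : S'ᶜ ⊆ ⋃ n, F' n) :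
    ∃ h : Z ≃ₜ Z', ∀ z, z ∈ S ↔ h z ∈ S' := by
  obtain ⟨c, hc, hsep⟩ := exists_separating_codes Z
  obtain ⟨c', hc', hsep'⟩ := exists_separating_codes Z'
  obtain ⟨s, hs⟩ := Stage.exists_seq_step hc hc' hF hF'
  obtain ⟨h, hh⟩ := Stage.exists_homeomorph_of_step hs hsep hsep'
  refine ⟨h, fun z ↦ ?_⟩
  by_cases hz : ∃ n, ∃ p ∈ (s n).graph, p.1 = z
  · obtain ⟨n, p, hp, rfl⟩ := hz
    rw [hh n p hp]
    exact (s n).isPartialMatching.mem_iff p hp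
  have hzS : z ∈ S := by
    by_contra hzS
    obtain ⟨m, hm⟩ := mem_iUnion.1 (hcover hzS)
    exact hz (Stage.exists_mem_fst_image_graph hs hsep hmono hm)
  have hzS' : h z ∈ S' := by
    by_contra hzS'
    obtain ⟨m, hm⟩ := mem_iUnion.1 (hcover' hzS')
    obtain ⟨n, q, hq, hqz⟩ :=
      Stage.exists_mem_fst_image_graph (fun n ↦ (hs n).symm) hsep' hmono' hm
    exact hz ⟨n, q.swap, hq, h.injective ((hh n q.swap hq).trans hqz)⟩
  exact iff_of_true hzS hzS'

theorem nonempty_homeomorph_of_perfectSpace (Z Z' : Type*) [TopologicalSpace Z] [CompactSpace Z]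
    [T2Space Z] [TotallyDisconnectedSpace Z] [SecondCountableTopology Z] [PerfectSpace Z]
    [Nonempty Z] [TopologicalSpace Z'] [CompactSpace Z'] [T2Space Z'] [TotallyDisconnectedSpace Z']
    [SecondCountableTopology Z'] [PerfectSpace Z'] [Nonempty Z'] : Nonempty (Z ≃ₜ Z') := by
  obtain ⟨h, -⟩ := exists_homeomorph_mem_iff_of_isAbsorbed (S := univ) (S' := univ)
    (fun _ ↦ IsAbsorbed.empty (Z := Z) (Z' := Z')) (fun _ ↦ IsAbsorbed.empty) monotone_const
    monotone_const (compl_univ.trans_subset (empty_subset _))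
    (compl_univ.trans_subset (empty_subset _))
  exact ⟨h⟩

theorem exists_monotone_isNowhereDense_of_isMeagre {Y : Type*} [TopologicalSpace Y] {M : Set Y}
    (hM : IsMeagre M) :
    ∃ F : ℕ → Set Y, Monotone F ∧ (∀ n, IsClosed (F n) ∧ IsNowhereDense (F n)) ∧ M ⊆ ⋃ n, F n := by
  obtain ⟨𝒩, h𝒩, hcount, hM𝒩⟩ := isMeagre_iff_countable_union_isNowhereDense.1 hM
  obtain ⟨N, hN⟩ := (hcount.insert ∅).exists_eq_range (insert_nonempty ∅ 𝒩)
  have hNnd (n : ℕ) : IsNowhereDense (N n) := by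
    obtain h | h := hN.symm ▸ mem_range_self n
    · exact h ▸ isNowhereDense_empty
    · exact h𝒩 _ h
  refine ⟨fun n ↦ closure (partialSups N n),
    fun m n hmn ↦ closure_mono ((partialSups N).monotone hmn),
    fun n ↦ ⟨isClosed_closure, IsNowhereDense.closure ?_⟩, ?_⟩
  · induction n with
    | zero => simpa only [partialSups_zero] using hNnd 0
    | succ n ih =>
      rw [partialSups_add_one]
      exact isNowhereDense_union ih (hNnd (n + 1))
  · refine hM𝒩.trans (sUnion_subset fun t ht ↦ ?_)
    obtain ⟨n, rfl⟩ : t ∈ range N := hN ▸ mem_insert_of_mem ∅ ht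
    exact (le_partialSups N n).trans (subset_closure.trans (subset_iUnion_of_subset n Subset.rfl))

theorem exists_homeomorph_mem_iff_of_mem_residual (hS : S ∈ residual Z) (hS' : S' ∈ residual Z')
    (h : EmbedsInEveryOpen S S') (h' : EmbedsInEveryOpen S' S) :
    ∃ φ : Z ≃ₜ Z', ∀ z, z ∈ S ↔ φ z ∈ S' := by
  obtain ⟨F, hmono, hF, hcover⟩ :=
    exists_monotone_isNowhereDense_of_isMeagre (M := Sᶜ) (by rwa [IsMeagre, compl_compl])
  obtain ⟨F', hmono', hF', hcover'⟩ :=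
    exists_monotone_isNowhereDense_of_isMeagre (M := S'ᶜ) (by rwa [IsMeagre, compl_compl])
  exact exists_homeomorph_mem_iff_of_isAbsorbed
    (fun n ↦ ⟨(hF n).1, (hF n).2, h.comp continuous_subtype_val Subtype.val_injective⟩)
    (fun n ↦ ⟨(hF' n).1, (hF' n).2, h'.comp continuous_subtype_val Subtype.val_injective⟩)
    hmono hmono' hcover hcover'

theorem hHomEmbedded_of_mem_residual (hS : S ∈ residual Z) (h : EmbedsInEveryOpen S S) :
    HHomEmbedded S := by
  refine ⟨{U | IsClopen U ∧ U.Nonempty}, fun U hU ↦ hU, ?_, ?_⟩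
  · rintro V hV ⟨x, hx⟩
    obtain ⟨U, hU, hxU, hUV⟩ := zeroDimensional_of_compactSpace Z x V hV hx
    exact ⟨U, ⟨hU, x, hxU⟩, hUV⟩
  · rintro U ⟨hU, hne⟩
    have := isCompact_iff_compactSpace.1 hU.isClosed.isCompact
    have := hne.to_subtype
    have := perfectSpace_of_isOpen hU.isOpen
    obtain ⟨φ, hφ⟩ := exists_homeomorph_mem_iff_of_mem_residual
      (S' := (Subtype.val ⁻¹' S : Set U)) hS
      (tendsto_residual_of_isOpenMap continuous_subtype_val hU.isOpen.isOpenMap_subtype_val hS)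
      (h.codRestrict hU.isOpen) (h.comp continuous_subtype_val Subtype.val_injective)
    refine ⟨φ, ?_⟩
    have hφS : φ '' S = Subtype.val ⁻¹' S := by
      rw [φ.image_eq_preimage_symm]
      ext u
      rw [mem_preimage, hφ, φ.apply_symm_apply]
    rw [hφS, Subtype.image_preimage_coe, inter_comm]

theorem HHomEmbedded.image {Z Z' : Type*} [TopologicalSpace Z] [TopologicalSpace Z'] {S : Set Z}
    (h : HHomEmbedded S) (T : Z ≃ₜ Z') : HHomEmbedded (T '' S) := by
  obtain ⟨ℬ, hℬ, hπ, hφ⟩ := h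
  refine ⟨Set.image T '' ℬ, forall_mem_image.2 fun U hU ↦
    ⟨⟨T.isClosedMap _ (hℬ U hU).1.isClosed, T.isOpenMap _ (hℬ U hU).1.isOpen⟩,
      (hℬ U hU).2.image T⟩, fun V hV hne ↦ ?_,
    forall_mem_image.2 fun U hU ↦ ?_⟩
  · obtain ⟨U, hU, hUV⟩ := hπ (T ⁻¹' V) (hV.preimage T.continuous) (hne.preimage T.surjective)
    exact ⟨T '' U, mem_image_of_mem _ hU, image_subset_iff.2 hUV⟩
  · obtain ⟨φ, hφU⟩ := hφ U hU
    refine ⟨(T.symm.trans φ).trans (T.image U), ?_⟩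
    rw [← image_inter T.injective, ← hφU]
    simp only [image_image, Homeomorph.trans_apply, Homeomorph.symm_apply_apply]
    rfl

end Homeomorphism

section Polish

variable {G Y : Type*} [TopologicalSpace G] [TopologicalSpace.IsCompletelyMetrizableSpace G]
  [TopologicalSpace Y] {j : G → Y}

theorem isGδ_range_of_isEmbedding [T2Space Y] (hj : IsEmbedding j) (hd : DenseRange j) :
    IsGδ (range j) := by
  let := TopologicalSpace.upgradeIsCompletelyMetrizable G
  let O (n : ℕ) : Set Y :=
    ⋃₀ {V | IsOpen V ∧ ∀ a b, j a ∈ V → j b ∈ V → dist a b < 1 / ((n : ℝ) + 1)}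
  have hO (n) : IsOpen (O n) := isOpen_sUnion fun V hV ↦ hV.1
  suffices range j = ⋂ n, O n from this ▸ .iInter_of_isOpen hO
  refine Subset.antisymm (range_subset_iff.2 fun a ↦ mem_iInter.2 fun n ↦ ?_) fun y hy ↦ ?_
  · have hpos : (0 : ℝ) < 1 / (n + 1) / 2 := by positivity
    obtain ⟨V, hV, hVa⟩ := hj.isInducing.isOpen_iff.1 (Metric.isOpen_ball (x := a)
      (ε := 1 / ((n : ℝ) + 1) / 2))
    have hball (b) : j b ∈ V ↔ dist b a < 1 / ((n : ℝ) + 1) / 2 := Set.ext_iff.1 hVa b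
    refine ⟨V, ⟨hV, fun b c hb hc ↦ ?_⟩, (hball a).2 (by rwa [dist_self])⟩
    linarith [dist_triangle_right b c a, (hball b).1 hb, (hball c).1 hc]
  · have hcauchy : Cauchy (comap j (𝓝 y)) := by
      refine Metric.cauchy_iff.2 ⟨?_, fun ε hε ↦ ?_⟩
      · exact IsDenseInducing.comap_nhds_neBot ⟨hj.isInducing, hd⟩ y
      · obtain ⟨n, hn⟩ := exists_nat_one_div_lt hε
        obtain ⟨V, ⟨hV, hVdist⟩, hyV⟩ := mem_iInter.1 hy n
        exact ⟨j ⁻¹' V, preimage_mem_comap (hV.mem_nhds hyV),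
          fun a ha b hb ↦ (hVdist a b ha hb).trans hn⟩
    have := hcauchy.1
    obtain ⟨a, ha⟩ := CompleteSpace.complete hcauchy
    exact ⟨a, tendsto_nhds_unique ((hj.continuous.tendsto a).mono_left ha) tendsto_comap⟩

end Polish

section Powers

theorem exists_injective_infinite_compl_range (I : Finset ℕ) :
    ∃ f : ℕ → ℕ, f.Injective ∧ (∀ i ∈ I, i ∉ range f) ∧ (range f)ᶜ.Infinite := by
  refine ⟨fun m ↦ 2 * (I.sup id + 1 + m), fun m n h ↦ by lia, fun i hi ↦ ?_, ?_⟩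
  · rintro ⟨m, rfl⟩
    have : 2 * (I.sup id + 1 + m) ≤ I.sup id := Finset.le_sup (f := id) hi
    lia
  · refine infinite_of_injective_forall_mem (f := fun m ↦ 2 * m + 1)
      (fun m n h ↦ by lia) fun m ↦ ?_
    rintro ⟨n, hn⟩
    lia

variable {ι κ K : Type*} {A : Set K}

theorem extend_mem_univ_pi_iff {f : κ → ι} (hf : f.Injective) {d : ι → K}
    (hd : d ∈ univ.pi fun _ ↦ A) (x : κ → K) :
    Function.extend f x d ∈ univ.pi (fun _ ↦ A) ↔ x ∈ univ.pi fun _ ↦ A := by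
  refine ⟨fun hx m _ ↦ hf.extend_apply x d m ▸ hx (f m) trivial, fun hx i _ ↦ ?_⟩
  by_cases hi : i ∈ range f
  · obtain ⟨m, rfl⟩ := hi
    rw [hf.extend_apply]
    exact hx m trivial
  · rw [Function.extend_apply' _ d i hi]
    exact hd i trivial

variable [TopologicalSpace K]

theorem isNowhereDense_setOf_eqOn [T1Space K] [Nontrivial K] (d : ι → K) {J : Set ι}
    (hJ : J.Infinite) : IsNowhereDense {x | EqOn x d J} := by
  classical
  have hclosed : IsClosed {x : ι → K | EqOn x d J} := by
    simp only [EqOn, ofPred_forall]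
    exact isClosed_biInter fun i _ ↦ isClosed_singleton.preimage (continuous_apply i)
  refine hclosed.isNowhereDense_iff.2 (eq_empty_of_forall_notMem fun x hx ↦ ?_)
  obtain ⟨I, u, hu, hI⟩ := isOpen_pi_iff.1 isOpen_interior x hx
  obtain ⟨i, hiJ, hiI⟩ := hJ.exists_notMem_finset I
  obtain ⟨k, hk⟩ := exists_ne (d i)
  have hmem : Function.update x i k ∈ (I : Set ι).pi u := fun m hm ↦ by
    rw [Function.update_of_ne (ne_of_mem_of_not_mem hm hiI)]
    exact (hu m hm).2
  exact hk ((Function.update_self i k x).symm.trans (interior_subset (hI hmem) hiJ))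

theorem perfectSpace_pi [Infinite ι] [T1Space K] [Nontrivial K] : PerfectSpace (ι → K) := by
  refine perfectSpace_iff_forall_not_isolated.2 fun x ↦ neBot_iff.2 fun hx ↦ ?_
  have hopen : IsOpen ({x} : Set (ι → K)) := (isOpen_singleton_iff_punctured_nhds x).2 hx
  have hnd : IsNowhereDense ({x} : Set (ι → K)) :=
    (isNowhereDense_setOf_eqOn x infinite_univ).mono (singleton_subset_iff.2 (eqOn_refl x univ))
  exact (singleton_nonempty x).not_subset_empty
    ((hopen.subset_interior_iff.2 subset_closure).trans hnd.subset)

theorem continuous_extend_left {f : κ → ι} (hf : f.Injective) (d : ι → K) :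
    Continuous fun x : κ → K ↦ Function.extend f x d := by
  refine continuous_pi fun i ↦ ?_
  by_cases hi : i ∈ range f
  · obtain ⟨m, rfl⟩ := hi
    simpa only [hf.extend_apply] using continuous_apply m
  · simpa only [Function.extend_apply' _ d i hi] using continuous_const

theorem embedsInEveryOpen_univ_pi [T1Space K] [Nontrivial K] (hA : Dense A) :
    EmbedsInEveryOpen (univ.pi fun _ : ℕ ↦ A) (univ.pi fun _ : ℕ ↦ A) := by
  intro U hU hne
  obtain ⟨d, hdU, hdA⟩ := (dense_pi univ fun _ _ ↦ hA).inter_open_nonempty U hU hne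
  obtain ⟨I, u, hu, hIU⟩ := isOpen_pi_iff.1 hU d hdU
  obtain ⟨f, hf, hfI, hinf⟩ := exists_injective_infinite_compl_range I
  have heq (x : ℕ → K) : EqOn (Function.extend f x d) d (range f)ᶜ := fun i hi ↦
    Function.extend_apply' x d i hi
  refine ⟨fun x ↦ Function.extend f x d, continuous_extend_left hf d,
    Function.extend_injective hf d,
    range_subset_iff.2 fun x ↦ hIU fun i hi ↦ ?_,
    (isNowhereDense_setOf_eqOn d hinf).mono (range_subset_iff.2 heq),
    fun x ↦ (extend_mem_univ_pi_iff hf hdA x).symm⟩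
  rw [heq x (hfI i hi)]
  exact (hu i hi).2

theorem univ_pi_mem_residual [Countable ι] (hA : A ∈ residual K) :
    univ.pi (fun _ : ι ↦ A) ∈ residual (ι → K) := by
  rw [pi_def, biInter_univ]
  exact countable_iInter_mem.2 fun i ↦
    tendsto_residual_of_isOpenMap (continuous_apply i) (isOpenMap_eval i) hA

theorem hHomEmbedded_univ_pi_of_mem_residual [CompactSpace K] [T2Space K]
    [TotallyDisconnectedSpace K] [SecondCountableTopology K] [Nontrivial K]
    (hA : A ∈ residual K) : HHomEmbedded (univ.pi fun _ : ℕ ↦ A) :=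
  have := perfectSpace_pi (ι := ℕ) (K := K)
  hHomEmbedded_of_mem_residual (univ_pi_mem_residual hA)
    (embedsInEveryOpen_univ_pi (dense_of_mem_residual hA))

end Powers

section Compactification

theorem ZeroDimensional.exists_denseRange_isEmbedding {X : Type*} [TopologicalSpace X]
    [SecondCountableTopology X] [T0Space X] (hX : ZeroDimensional X) :
    ∃ K : Set (ℕ → Bool), IsClosed K ∧ ∃ i : X → K, IsEmbedding i ∧ DenseRange i := by
  obtain ⟨ι, hι⟩ := hX.exists_isEmbedding_nat_bool
  have hmem (x : X) : ι x ∈ closure (range ι) := subset_closure (mem_range_self x)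
  refine ⟨closure (range ι), isClosed_closure, codRestrict ι _ hmem, hι.codRestrict _ hmem, ?_⟩
  rintro ⟨y, hy⟩
  rw [closure_subtype, ← range_comp]
  exact hy

theorem range_mem_residual_of_isCompletelyMetrizableSpace {X Y : Type*} [TopologicalSpace X]
    [TopologicalSpace Y] [T2Space Y] {i : X → Y} (hi : IsEmbedding i) (hd : DenseRange i)
    {G : Set X} [TopologicalSpace.IsCompletelyMetrizableSpace G] (hG : Dense G) :
    range i ∈ residual Y := by
  have hdG : DenseRange (i ∘ ((↑) : G → X)) :=
    hd.comp hG.denseRange_val hi.continuous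
  exact mem_of_superset
    (residual_of_dense_Gδ (isGδ_range_of_isEmbedding (hi.comp .subtypeVal) hdG) hdG)
    (range_comp_subset_range _ _)

end Compactification

/-- Let `X` be a zero-dimensional separable metrizable space with at least two
points. If `X` has a dense Polish subspace then `X^ω` can be h-homogeneously
embedded in the Cantor set `2^ω`. -/
theorem statement16 {X : Type*} [TopologicalSpace X] [TopologicalSpace.SeparableSpace X]
    [TopologicalSpace.MetrizableSpace X] (hzd : ZeroDimensional X) (h2 : Nontrivial X)
    (hd : ∃ G : Set X, Dense G ∧ PolishSpace G) :
    ∃ S : Set (ℕ → Bool), Nonempty ((ℕ → X) ≃ₜ S) ∧ HHomEmbedded S := by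
  obtain ⟨G, hG, _⟩ := hd
  have : SecondCountableTopology X :=
    let := TopologicalSpace.metrizableSpaceMetric X
    UniformSpace.secondCountable_of_separable X
  obtain ⟨K, hK, i, hi, hdense⟩ := hzd.exists_denseRange_isEmbedding
  have : CompactSpace K := isCompact_iff_compactSpace.1 hK.isCompact
  have : Nontrivial K := hi.injective.nontrivial
  have hA : range i ∈ residual K :=
    range_mem_residual_of_isCompletelyMetrizableSpace hi hdense hG
  have := perfectSpace_pi (ι := ℕ) (K := K)
  have := perfectSpace_pi (ι := ℕ) (K := Bool)
  obtain ⟨T⟩ := nonempty_homeomorph_of_perfectSpace (ℕ → K) (ℕ → Bool)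
  have hT : IsEmbedding (T ∘ Pi.map fun _ : ℕ ↦ i) := T.isEmbedding.comp (.piMap fun _ ↦ hi)
  have hrange : range (T ∘ Pi.map fun _ : ℕ ↦ i) = T '' univ.pi fun _ ↦ range i := by
    rw [range_comp, range_piMap]
  exact ⟨T '' univ.pi fun _ ↦ range i, ⟨hT.toHomeomorph.trans (.setCongr hrange)⟩,
    (hHomEmbedded_univ_pi_of_mem_residual hA).image T⟩
end

section
/- Let X be a zero-dimensional countably controlled separable metrizable space. Then X^ω is countable dense homogeneous. -/
/-- A space `X` is countably controlled if every countable subset of `X` is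
contained in a Polish subspace of `X`. -/
def CountablyControlled (X : Type*) [TopologicalSpace X] : Prop :=
  ∀ D : Set X, D.Countable → ∃ G : Set X, D ⊆ G ∧ PolishSpace G
/-- A space is countable dense homogeneous (CDH) if for every pair of countable
dense subsets `A`, `B` there is a homeomorphism of the space onto itself
mapping `A` onto `B`. -/
def IsCDH (X : Type*) [TopologicalSpace X] : Prop :=
  ∀ A B : Set X, A.Countable → Dense A → B.Countable → Dense B →
    ∃ h : X ≃ₜ X, h '' A = B


/-!
Enumerate the two countable dense sets as `f` and `g`; all coordinates of their points lie in one
completely metrizable dense `G ⊆ X`. The homeomorphism is the limit of a tree of pairs of clopen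
boxes of `X^ω`, each level of which partitions the space on both sides.

A clopen set need not be a union of sets whose traces on `G` are small in a complete metric, but
around a point of `G` a small clopen piece can be cut off; the remainder is matched with a copy of
itself at a free coordinate of the opposite box. From then on the two matched coordinates are only
cut simultaneously, and they are separated only when both become small. Along a branch of the tree,
a coordinate either becomes small infinitely often, and then has a limit in `G` by completeness, or
stays matched from some point on, and then is copied from the other side.

In each step the least-indexed points of `f` and `g` in the two sides of a pair are kept together.
The partner of `f k` is therefore eventually constant: once no earlier term of `f` is left in the
box, the first term of `g` in the opposite box never changes.
-/

open Filter Function Set TopologicalSpace Topology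
open scoped Uniformity

namespace CountableDenseHomogeneity

section UniquelyCovers

variable {α β : Type*} {box : α → Set β} {C : Set α} {A : Set β}

/-- Every point of `A` lies in exactly one of the sets `box s` with `s ∈ C`. These sets may be
empty or stick out of `A`, so this is weaker than being a partition of `A`. -/
def UniquelyCovers (box : α → Set β) (C : Set α) (A : Set β) : Prop :=
  ∀ z ∈ A, ∃! s, s ∈ C ∧ z ∈ box s

theorem uniquelyCovers_singleton (box : α → Set β) (s : α) :
    UniquelyCovers box {s} (box s) :=
  fun _ hz => ⟨s, ⟨rfl, hz⟩, fun _ hr => hr.1⟩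

theorem UniquelyCovers.biUnion (hC : UniquelyCovers box C A) {D : α → Set α}
    (hD : ∀ s ∈ C, UniquelyCovers box (D s) (box s))
    (hsub : ∀ s ∈ C, ∀ r ∈ D s, box r ⊆ box s) :
    UniquelyCovers box (⋃ s ∈ C, D s) A := by
  intro z hz
  obtain ⟨s, ⟨hsC, hzs⟩, hs_unique⟩ := hC z hz
  obtain ⟨r, ⟨hrD, hzr⟩, hr_unique⟩ := hD s hsC z hzs
  refine ⟨r, ⟨mem_biUnion hsC hrD, hzr⟩, ?_⟩
  rintro r' ⟨hr', hzr'⟩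
  obtain ⟨s', hs'C, hr'D⟩ := mem_iUnion₂.1 hr'
  obtain rfl : s' = s := hs_unique s' ⟨hs'C, hsub s' hs'C r' hr'D hzr'⟩
  exact hr_unique r' ⟨hr'D, hzr'⟩

theorem UniquelyCovers.preimage_of_involutive (hC : UniquelyCovers box C A) {σ : α → α}
    (hσ : Involutive σ) : UniquelyCovers (fun s => box (σ s)) (σ ⁻¹' C) A := by
  intro z hz
  obtain ⟨s, hs, hs_unique⟩ := hC z hz
  refine ⟨σ s, by simpa only [mem_preimage, hσ s] using hs, fun r hr => ?_⟩
  rw [← hs_unique (σ r) hr, hσ r]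

end UniquelyCovers

/-- The set `S` lies on one side of `U`: membership in `U` is constant on `S`. -/
def Decides {X : Type*} (U S : Set X) : Prop := S ⊆ U ∨ S ⊆ Uᶜ

theorem antitone_decides {X : Type*} (U : Set X) : Antitone (Decides U) := fun _ _ hST h =>
  h.imp hST.trans hST.trans

/-- A notion of smallness for subsets of `X` that is inherited by subsets and for which every point
of `G` has a small clopen neighbourhood. -/
structure IsSmallness {X : Type*} [TopologicalSpace X] (G : Set X) (small : Set X → Prop) :
    Prop where
  antitone : Antitone small
  exists_isClopen : ∀ x ∈ G, ∃ W, IsClopen W ∧ x ∈ W ∧ small W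

/-- A notion of smallness for each step `n` of the construction: a set that is small in step `n`
lies on one side of each of the first `n` members of `U`, and the members of a decreasing sequence
of nonempty clopen sets that are small again and again have a point in common. -/
structure IsSmallnessScale {X : Type*} [TopologicalSpace X] (G : Set X) (U : ℕ → Set X)
    (small : ℕ → Set X → Prop) : Prop where
  isSmallness : ∀ n, IsSmallness G (small n)
  decides : ∀ {n k S}, small n S → k < n → Decides (U k) S
  nonempty_iInter : ∀ S : ℕ → Set X, (∀ n, IsClopen (S n)) → (∀ n, (S n).Nonempty) → Antitone S →
    (∃ᶠ n in atTop, small n (S n)) → (⋂ n, S n).Nonempty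

/-- A pair of basic clopen boxes `∏ i, left i` and `∏ j, right j` of `X^ω`, together with a partial
matching of their coordinates. It is a finite approximation of a homeomorphism of `X^ω` that sends
the first box onto the second one; the latter copies coordinate `i` of its argument to coordinate
`j` of its value as long as `i` and `j` stay matched. -/
@[ext]
structure BoxPair (X : Type*) [TopologicalSpace X] where
  left : ℕ → Set X
  right : ℕ → Set X
  Matched : ℕ → ℕ → Prop
  isClopen_left : ∀ i, IsClopen (left i)
  isClopen_right : ∀ j, IsClopen (right j)
  nonempty_left : ∀ i, (left i).Nonempty
  nonempty_right : ∀ j, (right j).Nonempty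
  left_eq_right : ∀ {i j}, Matched i j → left i = right j
  biUnique : Relator.BiUnique Matched
  eventually_free :
    ∀ᶠ i in atTop, left i = univ ∧ right i = univ ∧ ∀ j, ¬ Matched i j ∧ ¬ Matched j i

namespace BoxPair

variable {X : Type*} [TopologicalSpace X] {s t : BoxPair X} {i j : ℕ} {U S R : Set X} {m : Prop}

/-- The set of points of `X^ω` in the left box of a pair. -/
def leftBox (t : BoxPair X) : Set (ℕ → X) := univ.pi t.left

/-- The set of points of `X^ω` in the right box of a pair. -/
def rightBox (t : BoxPair X) : Set (ℕ → X) := univ.pi t.right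

/-- The pair of boxes in which the two sides are interchanged: it approximates the inverse of the
homeomorphism that `t` approximates. -/
def swap (t : BoxPair X) : BoxPair X where
  left := t.right
  right := t.left
  Matched i j := t.Matched j i
  isClopen_left := t.isClopen_right
  isClopen_right := t.isClopen_left
  nonempty_left := t.nonempty_right
  nonempty_right := t.nonempty_left
  left_eq_right h := (t.left_eq_right h).symm
  biUnique := ⟨fun _ _ _ h h' => t.biUnique.2 h h', fun _ _ _ h h' => t.biUnique.1 h h'⟩
  eventually_free := t.eventually_free.mono fun _ h => ⟨h.2.1, h.1, fun j => (h.2.2 j).symm⟩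

theorem swap_involutive : Involutive (swap (X := X)) := fun _ => rfl

theorem mem_leftBox {z : ℕ → X} : z ∈ t.leftBox ↔ ∀ i, z i ∈ t.left i := mem_univ_pi

theorem mem_rightBox {z : ℕ → X} : z ∈ t.rightBox ↔ ∀ j, z j ∈ t.right j := mem_univ_pi

theorem nonempty_leftBox (t : BoxPair X) : t.leftBox.Nonempty :=
  univ_pi_nonempty_iff.2 t.nonempty_left

theorem isOpen_leftBox (t : BoxPair X) : IsOpen t.leftBox := by
  obtain ⟨N, hN⟩ := eventually_atTop.1 t.eventually_free
  have leftBox_eq : t.leftBox = (Iio N).pi t.left := by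
    ext z
    refine ⟨fun hz i _ => hz i trivial, fun hz i _ => ?_⟩
    rcases lt_or_ge i N with hi | hi
    · exact hz i hi
    · exact (hN i hi).1 ▸ mem_univ _
  rw [leftBox_eq]
  exact isOpen_set_pi (finite_Iio N) fun i _ => (t.isClopen_left i).isOpen

/-- The only pair matching `i` or `j` that `t` may contain is `(i, j)`, so that `i` and `j` can be
cut simultaneously. -/
def Compatible (t : BoxPair X) (i j : ℕ) : Prop :=
  ∀ i' j', t.Matched i' j' → (i' = i ↔ j' = j)

theorem compatible_of_matched (h : t.Matched i j) : t.Compatible i j := fun _ _ h' =>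
  ⟨fun hi => t.biUnique.2 h' (hi ▸ h), fun hj => t.biUnique.1 h' (hj ▸ h)⟩

theorem compatible_of_not_matched (hi : ∀ j', ¬ t.Matched i j') (hj : ∀ i', ¬ t.Matched i' j) :
    t.Compatible i j := fun _ _ h =>
  ⟨fun hi' => (hi _ (hi' ▸ h)).elim, fun hj' => (hj _ (hj' ▸ h)).elim⟩

theorem Compatible.swap (h : t.Compatible i j) : t.swap.Compatible j i :=
  fun i' j' h' => (h j' i' h').symm

theorem exists_free (t : BoxPair X) : ∃ j, t.right j = univ ∧ ∀ i, ¬ t.Matched i j :=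
  let ⟨j, hj⟩ := t.eventually_free.exists
  ⟨j, hj.2.1, fun i => (hj.2.2 i).2⟩

/-- `s` arises from `t` by cutting the left coordinate `i` down by `S` and the right coordinate `j`
down by `R`; these two coordinates are matched in `s` exactly when `m` holds. -/
structure IsSlice (t s : BoxPair X) (i j : ℕ) (S R : Set X) (m : Prop) : Prop where
  left_eq : s.left = update t.left i (t.left i ∩ S)
  right_eq : s.right = update t.right j (t.right j ∩ R)
  matched_iff : ∀ i' j', s.Matched i' j' ↔ if i' = i ∧ j' = j then m else t.Matched i' j'

namespace IsSlice

theorem unique {s' : BoxPair X} (h : IsSlice t s i j S R m) (h' : IsSlice t s' i j S R m) :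
    s = s' :=
  BoxPair.ext (h.left_eq.trans h'.left_eq.symm) (h.right_eq.trans h'.right_eq.symm) <|
    funext₂ fun i' j' => propext <| (h.matched_iff i' j').trans (h'.matched_iff i' j').symm

theorem swap (h : IsSlice t s i j S R m) : IsSlice t.swap s.swap j i R S m where
  left_eq := h.right_eq
  right_eq := h.left_eq
  matched_iff i' j' := (h.matched_iff j' i').trans (by simp only [BoxPair.swap, and_comm])

theorem swap_iff :
    IsSlice t.swap s.swap j i R S m ↔ IsSlice t s i j S R m :=
  ⟨fun h => h.swap, IsSlice.swap⟩

theorem left_apply (h : IsSlice t s i j S R m) : s.left i = t.left i ∩ S := by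
  rw [h.left_eq, update_self]

theorem right_apply (h : IsSlice t s i j S R m) : s.right j = t.right j ∩ R := h.swap.left_apply

theorem matched (h : IsSlice t s i j S R m) (hm : m) : s.Matched i j := by
  simpa only [h.matched_iff, and_self, if_true] using hm

theorem left_subset (h : IsSlice t s i j S R m) (k : ℕ) : s.left k ⊆ t.left k := by
  have update_le : update t.left i (t.left i ∩ S) ≤ t.left :=
    update_le_iff.2 ⟨inter_subset_left, fun _ _ => le_rfl⟩
  exact h.left_eq ▸ update_le k

theorem mem_leftBox_iff (h : IsSlice t s i j S R m) {z : ℕ → X} :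
    z ∈ s.leftBox ↔ z ∈ t.leftBox ∧ z i ∈ S := by
  refine ⟨fun hz => ⟨fun k hk => h.left_subset k (hz k hk), ?_⟩, fun hz => ?_⟩
  · exact (h.left_apply ▸ mem_leftBox.1 hz i).2
  · refine mem_leftBox.2 fun k => ?_
    rcases eq_or_ne k i with rfl | hki
    · exact h.left_apply ▸ ⟨mem_leftBox.1 hz.1 k, hz.2⟩
    · rw [h.left_eq, update_of_ne hki]
      exact mem_leftBox.1 hz.1 k

theorem mem_rightBox_iff (h : IsSlice t s i j S R m) {z : ℕ → X} :
    z ∈ s.rightBox ↔ z ∈ t.rightBox ∧ z j ∈ R :=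
  h.swap.mem_leftBox_iff

end IsSlice

theorem exists_isSlice (hij : t.Compatible i j) (hS : IsClopen S) (hR : IsClopen R)
    (hneS : (t.left i ∩ S).Nonempty) (hneR : (t.right j ∩ R).Nonempty)
    (heq : m → t.left i ∩ S = t.right j ∩ R) : ∃ s, IsSlice t s i j S R m := by
  refine ⟨{
    left := update t.left i (t.left i ∩ S)
    right := update t.right j (t.right j ∩ R)
    Matched := fun i' j' => if i' = i ∧ j' = j then m else t.Matched i' j'
    isClopen_left := ?_
    isClopen_right := ?_
    nonempty_left := ?_
    nonempty_right := ?_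
    left_eq_right := ?_
    biUnique := ?_
    eventually_free := ?_ }, rfl, rfl, fun _ _ => Iff.rfl⟩
  · exact (forall_update_iff _ fun _ => IsClopen).2
      ⟨(t.isClopen_left i).inter hS, fun k _ => t.isClopen_left k⟩
  · exact (forall_update_iff _ fun _ => IsClopen).2
      ⟨(t.isClopen_right j).inter hR, fun k _ => t.isClopen_right k⟩
  · exact (forall_update_iff _ fun _ => Set.Nonempty).2 ⟨hneS, fun k _ => t.nonempty_left k⟩
  · exact (forall_update_iff _ fun _ => Set.Nonempty).2 ⟨hneR, fun k _ => t.nonempty_right k⟩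
  · intro i' j' h
    split_ifs at h with hij'
    · rw [hij'.1, hij'.2, update_self, update_self, heq h]
    · have := hij i' j' h
      rw [update_of_ne (by tauto), update_of_ne (by tauto), t.left_eq_right h]
  · constructor
    · intro i₁ i₂ j' h₁ h₂
      have := hij i₁ j'
      have := hij i₂ j'
      have := @t.biUnique.1 i₁ i₂ j'
      grind
    · intro i' j₁ j₂ h₁ h₂
      have := hij i' j₁
      have := hij i' j₂
      have := @t.biUnique.2 i' j₁ j₂
      grind
  · filter_upwards [t.eventually_free, eventually_ne_atTop i, eventually_ne_atTop j]
      with k hk hki hkj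
    simpa [hki, hkj] using hk

/-- The left boxes of the members of `C` cover the left box of `t` disjointly, and likewise on the
right: replacing `t` by the members of `C` is a possible step of the construction. -/
structure Partitions (C : Set (BoxPair X)) (t : BoxPair X) : Prop where
  left : UniquelyCovers leftBox C t.leftBox
  right : UniquelyCovers rightBox C t.rightBox

theorem Partitions.swap {C : Set (BoxPair X)} (h : Partitions C t) :
    Partitions (BoxPair.swap ⁻¹' C) t.swap where
  left := h.right.preimage_of_involutive swap_involutive
  right := h.left.preimage_of_involutive swap_involutive

section Refines

variable {r : BoxPair X} {small : Set X → Prop}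

/-- The boxes of `s` lie in those of `t`, and a matching of two coordinates may only be given up
once both of them range over small sets. -/
structure Refines (small : Set X → Prop) (s t : BoxPair X) : Prop where
  left_subset : ∀ i, s.left i ⊆ t.left i
  right_subset : ∀ j, s.right j ⊆ t.right j
  matched_or_small :
    ∀ {i j}, t.Matched i j → s.Matched i j ∨ small (s.left i) ∧ small (s.right j)

namespace Refines

theorem refl (small : Set X → Prop) (t : BoxPair X) : Refines small t t :=
  ⟨fun _ => Subset.rfl, fun _ => Subset.rfl, Or.inl⟩

theorem trans (hsmall : Antitone small) (hrs : Refines small r s) (hst : Refines small s t) :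
    Refines small r t where
  left_subset i := (hrs.left_subset i).trans (hst.left_subset i)
  right_subset j := (hrs.right_subset j).trans (hst.right_subset j)
  matched_or_small h := (hst.matched_or_small h).elim hrs.matched_or_small fun h' =>
    Or.inr ⟨hsmall (hrs.left_subset _) h'.1, hsmall (hrs.right_subset _) h'.2⟩

theorem swap (h : Refines small s t) : Refines small s.swap t.swap :=
  ⟨h.right_subset, h.left_subset, fun h' => (h.matched_or_small h').imp_right And.symm⟩

theorem leftBox_subset (h : Refines small s t) : s.leftBox ⊆ t.leftBox :=
  pi_mono fun i _ => h.left_subset i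

theorem rightBox_subset (h : Refines small s t) : s.rightBox ⊆ t.rightBox :=
  h.swap.leftBox_subset

end Refines

/-- The pair `t` can be partitioned into refinements satisfying `φ`. -/
def CanRefine (small : Set X → Prop) (t : BoxPair X) (φ : BoxPair X → Prop) : Prop :=
  ∃ C, Partitions C t ∧ ∀ s ∈ C, Refines small s t ∧ φ s

namespace CanRefine

variable {φ ψ : BoxPair X → Prop}

theorem pure (h : φ t) : CanRefine small t φ := by
  refine ⟨{t}, ⟨uniquelyCovers_singleton _ t, uniquelyCovers_singleton _ t⟩, ?_⟩
  rintro _ rfl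
  exact ⟨.refl small _, h⟩

theorem mono (h : CanRefine small t φ) (hφψ : ∀ s, Refines small s t → φ s → ψ s) :
    CanRefine small t ψ :=
  let ⟨C, hC, hCφ⟩ := h
  ⟨C, hC, fun s hs => ⟨(hCφ s hs).1, hφψ s (hCφ s hs).1 (hCφ s hs).2⟩⟩

theorem bind (hsmall : Antitone small) (h : CanRefine small t φ)
    (hψ : ∀ s, Refines small s t → φ s → CanRefine small s ψ) : CanRefine small t ψ := by
  obtain ⟨C, hC, hCφ⟩ := h
  choose! D hD hDψ using fun s hs => hψ s (hCφ s hs).1 (hCφ s hs).2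
  refine ⟨⋃ s ∈ C, D s, ⟨hC.left.biUnion (fun s hs => (hD s hs).left) ?_,
    hC.right.biUnion (fun s hs => (hD s hs).right) ?_⟩, ?_⟩
  · exact fun s hs r hr => (hDψ s hs r hr).1.leftBox_subset
  · exact fun s hs r hr => (hDψ s hs r hr).1.rightBox_subset
  · intro r hr
    obtain ⟨s, hs, hrs⟩ := mem_iUnion₂.1 hr
    exact ⟨(hDψ s hs r hrs).1.trans hsmall (hCφ s hs).1, (hDψ s hs r hrs).2⟩

theorem swap (h : CanRefine small t φ) : CanRefine small t.swap fun s => φ s.swap :=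
  let ⟨C, hC, hCφ⟩ := h
  ⟨BoxPair.swap ⁻¹' C, hC.swap, fun s hs => ⟨(hCφ s.swap hs).1.swap, (hCφ s.swap hs).2⟩⟩

theorem forall_finset {ι : Type*} {φ : ι → BoxPair X → Prop} (hsmall : Antitone small)
    (hφ : ∀ x {r s}, Refines small r s → φ x s → φ x r)
    (hstep : ∀ x s, ψ s → CanRefine small s fun r => ψ r ∧ φ x r) (F : Finset ι) (ht : ψ t) :
    CanRefine small t fun s => ψ s ∧ ∀ x ∈ F, φ x s := by
  induction F using Finset.cons_induction with
  | empty => exact .pure ⟨ht, by simp⟩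
  | cons x F _ ih =>
    refine ih.bind hsmall fun s _ hs => (hstep x s hs.1).mono fun r hrs hr => ⟨hr.1, ?_⟩
    exact (Finset.forall_mem_cons _ _).2 ⟨hr.2, fun y hy => hφ y hrs (hs.2 y hy)⟩

end CanRefine

/-- The conditions on a cut of `t` along `i` and `j` under which the result, should it have
nonempty sides, is a refinement of `t` with `i` and `j` matched exactly when `m` holds. -/
structure Sliceable (small : Set X → Prop) (t : BoxPair X) (i j : ℕ) (S R : Set X) (m : Prop) :
    Prop where
  isClopen_left : IsClopen S
  isClopen_right : IsClopen R
  nonempty_iff : (t.left i ∩ S).Nonempty ↔ (t.right j ∩ R).Nonempty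
  eq_of_matched : m → t.left i ∩ S = t.right j ∩ R
  matched_or_small : t.Matched i j → m ∨ small (t.left i ∩ S) ∧ small (t.right j ∩ R)

theorem Sliceable.swap (h : Sliceable small t i j S R m) : Sliceable small t.swap j i R S m where
  isClopen_left := h.isClopen_right
  isClopen_right := h.isClopen_left
  nonempty_iff := h.nonempty_iff.symm
  eq_of_matched hm := (h.eq_of_matched hm).symm
  matched_or_small h' := (h.matched_or_small h').imp_right And.symm

theorem sliceable_true (h : t.Matched i j) (hS : IsClopen S) :
    Sliceable small t i j S S True where
  isClopen_left := hS
  isClopen_right := hS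
  nonempty_iff := by rw [t.left_eq_right h]
  eq_of_matched _ := by rw [t.left_eq_right h]
  matched_or_small _ := Or.inl trivial

theorem IsSlice.refines (hs : IsSlice t s i j S R m) (h : Sliceable small t i j S R m) :
    Refines small s t where
  left_subset := hs.left_subset
  right_subset := hs.swap.left_subset
  matched_or_small {i' j'} h' := by
    by_cases hij : i' = i ∧ j' = j
    · obtain ⟨rfl, rfl⟩ := hij
      rw [hs.left_apply, hs.right_apply]
      exact (h.matched_or_small h').imp_left hs.matched
    · exact Or.inl ((hs.matched_iff i' j').2 (by rwa [if_neg hij]))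

theorem Sliceable.exists_isSlice (h : Sliceable small t i j S R m) (hij : t.Compatible i j)
    {z : ℕ → X} (hz : z ∈ t.leftBox) (hzS : z i ∈ S) :
    ∃ s, IsSlice t s i j S R m ∧ z ∈ s.leftBox := by
  have nonempty_left : (t.left i ∩ S).Nonempty := ⟨z i, mem_leftBox.1 hz i, hzS⟩
  obtain ⟨s, hs⟩ := BoxPair.exists_isSlice hij h.isClopen_left h.isClopen_right nonempty_left
    (h.nonempty_iff.1 nonempty_left) h.eq_of_matched
  exact ⟨s, hs, hs.mem_leftBox_iff.2 ⟨hz, hzS⟩⟩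

section Split

variable {m' : Prop}

theorem uniquelyCovers_leftBox_isSlice (hij : t.Compatible i j)
    (h : Sliceable small t i j S R m) (h' : Sliceable small t i j Sᶜ Rᶜ m') :
    UniquelyCovers leftBox {s | IsSlice t s i j S R m ∨ IsSlice t s i j Sᶜ Rᶜ m'} t.leftBox := by
  intro z hz
  by_cases hzS : z i ∈ S
  · obtain ⟨s, hs, hzs⟩ := h.exists_isSlice hij hz hzS
    refine ⟨s, ⟨Or.inl hs, hzs⟩, ?_⟩
    rintro r ⟨hr | hr, hzr⟩
    · exact hr.unique hs
    · exact absurd hzS (hr.mem_leftBox_iff.1 hzr).2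
  · obtain ⟨s, hs, hzs⟩ := h'.exists_isSlice hij hz hzS
    refine ⟨s, ⟨Or.inr hs, hzs⟩, ?_⟩
    rintro r ⟨hr | hr, hzr⟩
    · exact absurd (hr.mem_leftBox_iff.1 hzr).2 hzS
    · exact hr.unique hs

theorem canRefine_isSlice (hij : t.Compatible i j) (h : Sliceable small t i j S R m)
    (h' : Sliceable small t i j Sᶜ Rᶜ m') :
    CanRefine small t fun s => IsSlice t s i j S R m ∨ IsSlice t s i j Sᶜ Rᶜ m' := by
  set C := {s | IsSlice t s i j S R m ∨ IsSlice t s i j Sᶜ Rᶜ m'}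
  have eq_preimage_swap : C = BoxPair.swap ⁻¹'
      {s | IsSlice t.swap s j i R S m ∨ IsSlice t.swap s j i Rᶜ Sᶜ m'} :=
    Set.ext fun s => (or_congr IsSlice.swap_iff IsSlice.swap_iff).symm
  refine ⟨C, ⟨uniquelyCovers_leftBox_isSlice hij h h', ?_⟩,
    fun s hs => ⟨hs.elim (·.refines h) (·.refines h'), hs⟩⟩
  rw [eq_preimage_swap]
  exact (uniquelyCovers_leftBox_isSlice hij.swap h.swap h'.swap).preimage_of_involutive
    swap_involutive

end Split

section Tracked

variable {a b : ℕ → X} {m' : Prop}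

/-- The pair keeps the points `a` and `b` together: its left box contains `a` exactly when its
right box contains `b`. -/
def Tracked (a b : ℕ → X) (s : BoxPair X) : Prop :=
  a ∈ s.leftBox ↔ b ∈ s.rightBox

theorem Tracked.swap (h : Tracked a b s) : Tracked b a s.swap := Iff.symm h

theorem Tracked.of_refines (h : Tracked a b t) (ha : a ∉ t.leftBox) (hst : Refines small s t) :
    Tracked a b s :=
  iff_of_false (fun h' => ha (hst.leftBox_subset h')) fun h' =>
    ha (h.2 (hst.rightBox_subset h'))

theorem canRefine_tracked_isSlice (hij : t.Compatible i j) (h : Sliceable small t i j S R m)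
    (h' : Sliceable small t i j Sᶜ Rᶜ m') (hab : Tracked a b t) (ha : a i ∈ S) (hb : b j ∈ R) :
    CanRefine small t fun s => Tracked a b s ∧ (a ∈ s.leftBox → IsSlice t s i j S R m) := by
  refine (canRefine_isSlice hij h h').mono fun s _ hs => ?_
  simp only [Tracked] at hab ⊢
  rcases hs with hs | hs
  · rw [hs.mem_leftBox_iff, hs.mem_rightBox_iff, and_iff_left ha, and_iff_left hb]
    exact ⟨hab, fun _ => hs⟩
  · rw [hs.mem_leftBox_iff, hs.mem_rightBox_iff]
    simp only [mem_compl_iff, ha, hb, not_true, and_false, false_imp_iff, and_self]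

end Tracked

/-- The left coordinate `i` of `t` has been dealt with: it ranges over a small set, or it has a
partner and its values all lie in `U` or all outside `U`. -/
def Resolved (small : Set X → Prop) (U : Set X) (i : ℕ) (t : BoxPair X) : Prop :=
  small (t.left i) ∨ (∃ j, t.Matched i j) ∧ Decides U (t.left i)

theorem Resolved.of_refines (hsmall : Antitone small) (h : Resolved small U i t)
    (hst : Refines small s t) : Resolved small U i s := by
  rcases h with h | ⟨⟨j, hj⟩, hU⟩
  · exact Or.inl (hsmall (hst.left_subset i) h)
  · exact (hst.matched_or_small hj).symm.imp And.left fun hj' =>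
      ⟨⟨j, hj'⟩, antitone_decides U (hst.left_subset i) hU⟩

variable {G : Set X} {a b : ℕ → X}

theorem canRefine_small_or_matched (hsmall : IsSmallness G small) (hG : Dense G) (t : BoxPair X)
    (i : ℕ) : CanRefine small t fun s => small (s.left i) ∨ ∃ j, s.Matched i j := by
  by_cases hi : ∃ j, t.Matched i j
  · exact .pure (Or.inr hi)
  push Not at hi
  obtain ⟨x, hxt, hxG⟩ := hG.inter_open_nonempty _ (t.isClopen_left i).isOpen (t.nonempty_left i)
  obtain ⟨W, hW, hxW, hW_small⟩ := hsmall.exists_isClopen x hxG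
  obtain ⟨j, hj_univ, hj⟩ := t.exists_free
  -- The points outside `W` are matched with a copy `K` of themselves at the free coordinate `j`.
  set K := t.left i ∩ Wᶜ
  have hK_clopen : IsClopen K := (t.isClopen_left i).inter hW.compl
  have sliceable_W : Sliceable small t i j W Kᶜ False :=
    { isClopen_left := hW
      isClopen_right := hK_clopen.compl
      nonempty_iff := iff_of_true ⟨x, hxt, hxW⟩ ⟨x, hj_univ ▸ mem_univ x, fun h => h.2 hxW⟩
      eq_of_matched := False.elim
      matched_or_small := fun h => (hi j h).elim }
  have sliceable_compl : Sliceable small t i j Wᶜ Kᶜᶜ True :=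
    { isClopen_left := hW.compl
      isClopen_right := hK_clopen.compl.compl
      nonempty_iff := by rw [compl_compl, hj_univ, univ_inter]
      eq_of_matched := fun _ => by rw [compl_compl, hj_univ, univ_inter]
      matched_or_small := fun _ => Or.inl trivial }
  refine (canRefine_isSlice (compatible_of_not_matched hi hj) sliceable_W sliceable_compl).mono
    fun s _ hs => hs.imp (fun hs => ?_) fun hs => ⟨j, hs.matched trivial⟩
  rw [hs.left_apply]
  exact hsmall.antitone inter_subset_right hW_small

theorem canRefine_resolved (hsmall : IsSmallness G small) (hG : Dense G) (hU : IsClopen U)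
    (t : BoxPair X) (i : ℕ) : CanRefine small t (Resolved small U i) := by
  refine (canRefine_small_or_matched hsmall hG t i).bind hsmall.antitone fun s _ hs => ?_
  rcases hs with hs | ⟨j, hj⟩
  · exact .pure (Or.inl hs)
  refine (canRefine_isSlice (compatible_of_matched hj) (sliceable_true hj hU)
    (sliceable_true hj hU.compl)).mono fun r _ hr => Or.inr ?_
  rcases hr with hr | hr
  · exact ⟨⟨j, hr.matched trivial⟩, Or.inl (hr.left_apply ▸ inter_subset_right)⟩
  · exact ⟨⟨j, hr.matched trivial⟩, Or.inr (hr.left_apply ▸ inter_subset_right)⟩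

theorem canRefine_tracked_subset (hij : t.Matched i j) (hab : Tracked a b t) (hS : IsClopen S)
    (ha : a i ∈ S) (hb : b j ∈ S) :
    CanRefine small t fun s =>
      Tracked a b s ∧ (a ∈ s.leftBox → s.Matched i j ∧ s.left i ⊆ S) :=
  (canRefine_tracked_isSlice (compatible_of_matched hij) (sliceable_true hij hS)
    (sliceable_true hij hS.compl) hab ha hb).mono fun _ _ hs => ⟨hs.1, fun has =>
      ⟨(hs.2 has).matched trivial, (hs.2 has).left_apply ▸ inter_subset_right⟩⟩

/-- Two matched coordinates at which the tracked points differ are cut crosswise, so that each of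
the two sides becomes small around its tracked point. -/
theorem canRefine_tracked_small_of_subset (hsmall : Antitone small) (hij : t.Matched i j)
    (hab : Tracked a b t) (ha : a ∈ t.leftBox) {W W' Y : Set X} (hW : small W) (hW' : small W')
    (hY : IsClopen Y) (haY : a i ∈ Y) (hbY : b j ∉ Y) (hsub : t.left i ⊆ Y.ite W W') :
    CanRefine small t fun s => Tracked a b s ∧ (a ∈ s.leftBox → small (s.left i)) := by
  have ha_left : a i ∈ t.left i := mem_leftBox.1 ha i
  have hb_right : b j ∈ t.right j := mem_rightBox.1 (hab.1 ha) j
  have left_eq_right := t.left_eq_right hij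
  have small_inter : small (t.left i ∩ Y) := by
    refine hsmall ((inter_subset_inter_left Y hsub).trans ?_) hW
    exact (ite_inter_self ..).trans_subset inter_subset_left
  have small_inter_compl : small (t.left i ∩ Yᶜ) := by
    refine hsmall ((inter_subset_inter_left Yᶜ hsub).trans ?_) hW'
    exact (ite_inter_compl_self ..).trans_subset inter_subset_left
  have sliceable : Sliceable small t i j Y Yᶜ False :=
    { isClopen_left := hY
      isClopen_right := hY.compl
      nonempty_iff := iff_of_true ⟨a i, ha_left, haY⟩ ⟨b j, hb_right, hbY⟩
      eq_of_matched := False.elim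
      matched_or_small := fun _ => Or.inr ⟨small_inter, left_eq_right ▸ small_inter_compl⟩ }
  have sliceable_compl : Sliceable small t i j Yᶜ Yᶜᶜ False :=
    { isClopen_left := hY.compl
      isClopen_right := hY.compl.compl
      nonempty_iff := iff_of_true ⟨b j, left_eq_right ▸ hb_right, hbY⟩
        ⟨a i, left_eq_right ▸ ha_left, not_not.2 haY⟩
      eq_of_matched := False.elim
      matched_or_small := fun _ => Or.inr
        ⟨small_inter_compl, by rw [compl_compl]; exact left_eq_right ▸ small_inter⟩ }
  exact (canRefine_tracked_isSlice (compatible_of_matched hij) sliceable sliceable_compl hab haY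
    hbY).mono fun s _ hs => ⟨hs.1, fun has => (hs.2 has).left_apply ▸ small_inter⟩

theorem canRefine_tracked_small_of_matched [TotallySeparatedSpace X] (hsmall : IsSmallness G small)
    (hij : t.Matched i j) (hab : Tracked a b t) (haG : a i ∈ G) (hbG : b j ∈ G) :
    CanRefine small t fun s => Tracked a b s ∧ (a ∈ s.leftBox → small (s.left i)) := by
  obtain ⟨W, hW, haW, hW_small⟩ := hsmall.exists_isClopen _ haG
  obtain ⟨W', hW', hbW', hW'_small⟩ := hsmall.exists_isClopen _ hbG
  by_cases hab_eq : a i = b j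
  · exact (canRefine_tracked_subset hij hab hW haW (hab_eq ▸ haW)).mono fun s _ hs =>
      ⟨hs.1, fun has => hsmall.antitone (hs.2 has).2 hW_small⟩
  obtain ⟨Y, hY, haY, hbY⟩ := exists_isClopen_of_totally_separated hab_eq
  refine (canRefine_tracked_subset hij hab ((hW.inter hY).union (hW'.diff hY))
    (Or.inl ⟨haW, haY⟩) (Or.inr ⟨hbW', hbY⟩)).bind hsmall.antitone fun s _ hs => ?_
  by_cases has : a ∈ s.leftBox
  · exact canRefine_tracked_small_of_subset hsmall.antitone (hs.2 has).1 hs.1 has hW_small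
      hW'_small hY haY hbY (hs.2 has).2
  · exact .pure ⟨hs.1, fun h => absurd h has⟩

theorem canRefine_tracked_small_of_not_matched (hsmall : IsSmallness G small)
    (hi : ∀ j, ¬ t.Matched i j) (hab : Tracked a b t) (ha : a ∈ t.leftBox) (haG : a i ∈ G) :
    CanRefine small t fun s => Tracked a b s ∧ (a ∈ s.leftBox → small (s.left i)) := by
  obtain ⟨W, hW, haW, hW_small⟩ := hsmall.exists_isClopen _ haG
  obtain ⟨j, hj_univ, hj⟩ := t.exists_free
  set K := t.left i ∩ Wᶜ with hK
  have hK_clopen : IsClopen K := (t.isClopen_left i).inter hW.compl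
  have haK : a i ∈ Kᶜ := fun h => h.2 haW
  -- The right side is cut into as many nonempty parts as the left one, with `b` in the first part.
  obtain ⟨R, hR, hbR, hR_iff⟩ : ∃ R, IsClopen R ∧ b j ∈ R ∧ (K.Nonempty ↔ Rᶜ.Nonempty) := by
    by_cases hbK : b j ∈ K
    · exact ⟨K, hK_clopen, hbK, iff_of_true ⟨b j, hbK⟩ ⟨a i, haK⟩⟩
    · exact ⟨Kᶜ, hK_clopen.compl, hbK, by rw [compl_compl]⟩
  have sliceable_W : Sliceable small t i j W R False :=
    { isClopen_left := hW
      isClopen_right := hR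
      nonempty_iff := iff_of_true ⟨a i, mem_leftBox.1 ha i, haW⟩
        ⟨b j, hj_univ ▸ mem_univ (b j), hbR⟩
      eq_of_matched := False.elim
      matched_or_small := fun h => (hi j h).elim }
  have sliceable_compl : Sliceable small t i j Wᶜ Rᶜ False :=
    { isClopen_left := hW.compl
      isClopen_right := hR.compl
      nonempty_iff := by rw [← hK, hj_univ, univ_inter, hR_iff]
      eq_of_matched := False.elim
      matched_or_small := fun h => (hi j h).elim }
  refine (canRefine_tracked_isSlice (compatible_of_not_matched hi hj) sliceable_W sliceable_compl
    hab haW hbR).mono fun s _ hs => ⟨hs.1, fun has => ?_⟩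
  rw [(hs.2 has).left_apply]
  exact hsmall.antitone inter_subset_right hW_small

theorem canRefine_tracked_small [TotallySeparatedSpace X] (hsmall : IsSmallness G small)
    (hab : Tracked a b t) (haG : ∀ i, a i ∈ G) (hbG : ∀ j, b j ∈ G) (i : ℕ) :
    CanRefine small t fun s => Tracked a b s ∧ (a ∈ s.leftBox → small (s.left i)) := by
  by_cases ha : a ∈ t.leftBox
  · by_cases hi : ∃ j, t.Matched i j
    · obtain ⟨j, hij⟩ := hi
      exact canRefine_tracked_small_of_matched hsmall hij hab (haG i) (hbG j)
    · exact canRefine_tracked_small_of_not_matched hsmall (not_exists.1 hi) hab ha (haG i)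
  · exact .pure ⟨hab, fun h => absurd h ha⟩

theorem canRefine_tracked_resolved [TotallySeparatedSpace X] (hsmall : IsSmallness G small)
    (hG : Dense G) (hU : IsClopen U) (hab : Tracked a b t) (haG : ∀ i, a i ∈ G)
    (hbG : ∀ j, b j ∈ G) (i : ℕ) :
    CanRefine small t fun s => Tracked a b s ∧ Resolved small U i s := by
  refine (canRefine_tracked_small hsmall hab haG hbG i).bind hsmall.antitone fun s _ hs => ?_
  by_cases has : a ∈ s.leftBox
  · exact .pure ⟨hs.1, Or.inl (hs.2 has)⟩
  · exact (canRefine_resolved hsmall hG hU s i).mono fun r hrs hr =>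
      ⟨hs.1.of_refines has hrs, hr⟩

/-- The first `n` coordinates on both sides of `t` have been dealt with as far as the first `n`
members of the sequence `U` are concerned. -/
def FullyResolved (small : Set X → Prop) (U : ℕ → Set X) (n : ℕ) (t : BoxPair X) : Prop :=
  ∀ i < n, ∀ k < n, Resolved small (U k) i t ∧ Resolved small (U k) i t.swap

theorem canRefine_tracked_fullyResolved [TotallySeparatedSpace X] (hsmall : IsSmallness G small)
    (hG : Dense G) {U : ℕ → Set X} (hU : ∀ k, IsClopen (U k)) (hab : Tracked a b t)
    (haG : ∀ i, a i ∈ G) (hbG : ∀ j, b j ∈ G) (n : ℕ) :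
    CanRefine small t fun s => Tracked a b s ∧ FullyResolved small U n s := by
  have step (x : ℕ × ℕ) (s : BoxPair X) (hs : Tracked a b s) : CanRefine small s fun r =>
      Tracked a b r ∧ Resolved small (U x.2) x.1 r ∧ Resolved small (U x.2) x.1 r.swap := by
    refine (canRefine_tracked_resolved hsmall hG (hU x.2) hs haG hbG x.1).bind hsmall.antitone
      fun r _ hr => ?_
    refine (canRefine_tracked_resolved hsmall hG (hU x.2) hr.1.swap hbG haG x.1).swap.mono
      fun q hqr hq => ⟨hq.1.swap, hr.2.of_refines hsmall.antitone hqr, hq.2⟩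
  refine (CanRefine.forall_finset hsmall.antitone (fun x r s hrs hs =>
    ⟨hs.1.of_refines hsmall.antitone hrs, hs.2.of_refines hsmall.antitone hrs.swap⟩) step
    (Finset.range n ×ˢ Finset.range n) hab).mono fun s _ hs => ⟨hs.1, fun i hi k hk => ?_⟩
  exact hs.2 (i, k) (Finset.mk_mem_product (Finset.mem_range.2 hi) (Finset.mem_range.2 hk))

end Refines

section FirstIndex

variable {α : Type*} {f : ℕ → α} {A : Set α} {k : ℕ}

/-- The least index of a term of the sequence `f` that lies in `A`, and `0` if there is none. -/
noncomputable def firstIndex (f : ℕ → α) (A : Set α) : ℕ := sInf {k | f k ∈ A}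

theorem apply_firstIndex_mem (h : ∃ k, f k ∈ A) : f (firstIndex f A) ∈ A := Nat.sInf_mem h

theorem firstIndex_le (h : f k ∈ A) : firstIndex f A ≤ k := Nat.sInf_le h

theorem eventually_firstIndex_eq_iInter {A : ℕ → Set α} (hA : Antitone A)
    (h : ∃ k, f k ∈ ⋂ n, A n) : ∀ᶠ n in atTop, firstIndex f (A n) = firstIndex f (⋂ n, A n) := by
  have eventually_notMem (m : ℕ) (hm : m < firstIndex f (⋂ n, A n)) :
      ∀ᶠ n in atTop, f m ∉ A n := by
    obtain ⟨N, hN⟩ : ∃ N, f m ∉ A N := by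
      simpa using fun hmem => (firstIndex_le hmem).not_gt hm
    exact (eventually_ge_atTop N).mono fun n hn hmem => hN (hA hn hmem)
  filter_upwards [(eventually_all_finite (finite_Iio _)).2 eventually_notMem] with n hn
  have iInter_subset_n : ⋂ n, A n ⊆ A n := iInter_subset A n
  refine le_antisymm (firstIndex_le (iInter_subset_n (apply_firstIndex_mem h))) ?_
  refine not_lt.1 fun hlt => hn _ hlt (apply_firstIndex_mem ?_)
  exact h.imp fun _ hk => iInter_subset_n hk

end FirstIndex

section Limit

variable {G : Set X} {U : ℕ → Set X} {small : ℕ → Set X → Prop} {f g : ℕ → ℕ → X} {n : ℕ}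

/-- One step of the construction: `s` is one of the pairs by which `t` is replaced in step `n`. It
keeps together the first point of `f` in the left box of `t` and the first point of `g` in the right
box of `t`. -/
structure IsChild (small : ℕ → Set X → Prop) (U : ℕ → Set X) (f g : ℕ → ℕ → X) (n : ℕ)
    (s t : BoxPair X) : Prop where
  refines : Refines (small n) s t
  fullyResolved : FullyResolved (small n) U n s
  tracked : Tracked (f (firstIndex f t.leftBox)) (g (firstIndex g t.rightBox)) s

theorem IsChild.swap (h : IsChild small U f g n s t) : IsChild small U g f n s.swap t.swap where
  refines := h.refines.swap
  fullyResolved i hi k hk := (h.fullyResolved i hi k hk).symm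
  tracked := h.tracked.swap

/-- A sequence of pairs of boxes as it arises along a branch of the construction. -/
def IsBranch (small : ℕ → Set X → Prop) (U : ℕ → Set X) (f g : ℕ → ℕ → X)
    (t : ℕ → BoxPair X) : Prop :=
  ∀ n, IsChild small U f g n (t (n + 1)) (t n)

namespace IsBranch

variable {t : ℕ → BoxPair X}

theorem swap (h : IsBranch small U f g t) : IsBranch small U g f fun n => (t n).swap :=
  fun n => (h n).swap

theorem antitone_left (h : IsBranch small U f g t) (i : ℕ) : Antitone fun n => (t n).left i :=
  antitone_nat_of_succ_le fun n => (h n).refines.left_subset i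

theorem antitone_right (h : IsBranch small U f g t) (j : ℕ) : Antitone fun n => (t n).right j :=
  h.swap.antitone_left j

theorem antitone_leftBox (h : IsBranch small U f g t) : Antitone fun n => (t n).leftBox :=
  fun _ _ hmn => pi_mono fun i _ => h.antitone_left i hmn

theorem exists_decides_right (hsmall : IsSmallnessScale G U small)
    (h : IsBranch small U f g t) (j k : ℕ) : ∃ n, Decides (U k) ((t n).right j) := by
  obtain ⟨n, hjn, hkn⟩ : ∃ n, j < n ∧ k < n := ⟨max j k + 1, by omega, by omega⟩
  exact ⟨n + 1, ((h n).fullyResolved j hjn k hkn).2.elim (hsmall.decides · hkn) And.right⟩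

theorem exists_eventually_matched (h : IsBranch small U f g t) {j : ℕ}
    (hj : ∀ᶠ n in atTop, ¬ small n ((t (n + 1)).right j)) :
    ∃ i, ∀ᶠ n in atTop, (t n).Matched i j := by
  obtain ⟨N, hN⟩ := eventually_atTop.1 hj
  obtain ⟨n, hNn, hjn⟩ : ∃ n, N ≤ n ∧ j < n := ⟨max N j + 1, by omega, by omega⟩
  obtain hs | ⟨⟨i, hi⟩, -⟩ := ((h n).fullyResolved j hjn 0 (by omega)).2
  · exact absurd hs (hN n hNn)
  refine ⟨i, eventually_atTop.2 ⟨n + 1, fun m hm => ?_⟩⟩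
  induction m, hm using Nat.le_induction with
  | base => exact hi
  | succ m hm ih =>
    exact ((h m).refines.matched_or_small ih).resolve_right fun hs => hN m (by omega) hs.2

/-- A right coordinate that becomes small again and again has a limit by completeness; any other one
is matched from some point on, and copies a coordinate of `z`. -/
theorem exists_forall_mem_rightBox (hsmall : IsSmallnessScale G U small)
    (h : IsBranch small U f g t) {z : ℕ → X} (hz : ∀ n, z ∈ (t n).leftBox) :
    ∃ w, ∀ n, w ∈ (t n).rightBox := by
  suffices ∀ j, ∃ x, ∀ n, x ∈ (t n).right j by
    choose w hw using this
    exact ⟨w, fun n => mem_rightBox.2 fun j => hw j n⟩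
  intro j
  by_cases hj : ∃ᶠ n in atTop, small n ((t (n + 1)).right j)
  · obtain ⟨x, hx⟩ := hsmall.nonempty_iInter (fun n => (t (n + 1)).right j)
      (fun n => (t _).isClopen_right j) (fun n => (t _).nonempty_right j)
      (fun _ _ hmn => h.antitone_right j (by omega)) hj
    exact ⟨x, fun n => h.antitone_right j n.le_succ (mem_iInter.1 hx n)⟩
  · obtain ⟨i, hi⟩ := h.exists_eventually_matched (not_frequently.1 hj)
    refine ⟨z i, fun n => ?_⟩
    obtain ⟨m, hm, hnm⟩ := (hi.and (eventually_ge_atTop n)).exists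
    have mem_right_m : z i ∈ (t m).right j := (t m).left_eq_right hm ▸ mem_leftBox.1 (hz m) i
    exact h.antitone_right j hnm mem_right_m

theorem exists_apply_mem_rightBox (h : IsBranch small U f g t) {k : ℕ}
    (hk : ∀ n, f k ∈ (t n).leftBox) : ∃ m, ∀ n, g m ∈ (t n).rightBox := by
  set b := fun n => firstIndex g (t n).rightBox
  have hk' : ∃ k, f k ∈ ⋂ n, (t n).leftBox := ⟨k, mem_iInter.2 hk⟩
  obtain ⟨N, hN⟩ := eventually_atTop.1 (eventually_firstIndex_eq_iInter h.antitone_leftBox hk')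
  have apply_b_mem (n : ℕ) (hn : N ≤ n) : g (b n) ∈ (t (n + 1)).rightBox := by
    refine (h n).tracked.1 ?_
    rw [hN n hn]
    exact mem_iInter.1 (apply_firstIndex_mem hk') (n + 1)
  have b_succ (n : ℕ) (hn : N ≤ n) : b (n + 1) = b n :=
    le_antisymm (firstIndex_le (apply_b_mem n hn)) <| firstIndex_le <|
      (h n).refines.rightBox_subset (apply_firstIndex_mem ⟨_, apply_b_mem n hn⟩)
  have b_eq (n : ℕ) (hn : N ≤ n) : b n = b N :=
    Nat.le_induction rfl (fun n hn ih => (b_succ n hn).trans ih) n hn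
  refine ⟨b N, fun n => h.swap.antitone_leftBox (by omega : n ≤ max n N + 1) ?_⟩
  exact b_eq (max n N) (le_max_right n N) ▸ apply_b_mem _ (le_max_right n N)

end IsBranch

/-- The levels of the tree of all pairs of boxes met by the construction. -/
structure IsTree (small : ℕ → Set X → Prop) (U : ℕ → Set X) (f g : ℕ → ℕ → X)
    (L : ℕ → Set (BoxPair X)) : Prop where
  uniquelyCovers_left : ∀ n, UniquelyCovers leftBox (L n) univ
  uniquelyCovers_right : ∀ n, UniquelyCovers rightBox (L n) univ
  exists_parent : ∀ n, ∀ s ∈ L (n + 1), ∃ t ∈ L n, IsChild small U f g n s t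

/-- The graph of the homeomorphism defined by the levels `L`: at each level, `z` and `w` belong to
the two sides of one pair of boxes. -/
def Related (L : ℕ → Set (BoxPair X)) (z w : ℕ → X) : Prop :=
  ∀ n, ∃ t ∈ L n, z ∈ t.leftBox ∧ w ∈ t.rightBox

namespace IsTree

variable {L : ℕ → Set (BoxPair X)} {z w w' : ℕ → X}

theorem swap (hL : IsTree small U f g L) :
    IsTree small U g f fun n => BoxPair.swap ⁻¹' L n where
  uniquelyCovers_left n := (hL.uniquelyCovers_right n).preimage_of_involutive swap_involutive
  uniquelyCovers_right n := (hL.uniquelyCovers_left n).preimage_of_involutive swap_involutive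
  exists_parent n s hs :=
    let ⟨t, ht, hst⟩ := hL.exists_parent n s.swap hs
    ⟨t.swap, ht, hst.swap⟩

theorem exists_branch (hL : IsTree small U f g L) (z : ℕ → X) :
    ∃ t, IsBranch small U f g t ∧ ∀ n, t n ∈ L n ∧ z ∈ (t n).leftBox := by
  choose t ht t_unique using fun n => hL.uniquelyCovers_left n z (mem_univ z)
  refine ⟨t, fun n => ?_, ht⟩
  obtain ⟨s, hs, hchild⟩ := hL.exists_parent n (t (n + 1)) (ht (n + 1)).1
  exact t_unique n s ⟨hs, hchild.refines.leftBox_subset (ht (n + 1)).2⟩ ▸ hchild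

theorem mem_rightBox_of_related (hL : IsTree small U f g L) (hzw : Related L z w) (ht : t ∈ L n)
    (hz : z ∈ t.leftBox) : w ∈ t.rightBox :=
  let ⟨_, hs, hzs, hws⟩ := hzw n
  (hL.uniquelyCovers_left n z (mem_univ z)).unique ⟨hs, hzs⟩ ⟨ht, hz⟩ ▸ hws

theorem exists_related (hsmall : IsSmallnessScale G U small) (hL : IsTree small U f g L)
    (z : ℕ → X) : ∃ w, Related L z w := by
  obtain ⟨t, ht, hz⟩ := hL.exists_branch z
  obtain ⟨w, hw⟩ := ht.exists_forall_mem_rightBox hsmall fun n => (hz n).2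
  exact ⟨w, fun n => ⟨t n, (hz n).1, (hz n).2, hw n⟩⟩

theorem exists_related_apply (hL : IsTree small U f g L) (k : ℕ) :
    ∃ m, Related L (f k) (g m) := by
  obtain ⟨t, ht, hk⟩ := hL.exists_branch (f k)
  obtain ⟨m, hm⟩ := ht.exists_apply_mem_rightBox fun n => (hk n).2
  exact ⟨m, fun n => ⟨t n, (hk n).1, (hk n).2, hm n⟩⟩

theorem related_unique [T1Space X] (hsmall : IsSmallnessScale G U small)
    (hU : IsTopologicalBasis (range U)) (hL : IsTree small U f g L) (hw : Related L z w)
    (hw' : Related L z w') : w = w' := by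
  obtain ⟨t, ht, hz⟩ := hL.exists_branch z
  funext j
  by_contra hne
  obtain ⟨_, ⟨k, rfl⟩, hwk, hk⟩ :=
    hU.exists_subset_of_mem_open (mem_compl_singleton_iff.2 hne) isOpen_compl_singleton
  obtain ⟨n, hn⟩ := ht.exists_decides_right hsmall j k
  have hwn := mem_rightBox.1 (hL.mem_rightBox_of_related hw (hz n).1 (hz n).2) j
  have hwn' := mem_rightBox.1 (hL.mem_rightBox_of_related hw' (hz n).1 (hz n).2) j
  rcases hn with hn | hn
  · exact hk (hn hwn') rfl
  · exact hn hwn hwk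

theorem continuous_of_related (hsmall : IsSmallnessScale G U small)
    (hU : IsTopologicalBasis (range U)) (hL : IsTree small U f g L) {F : (ℕ → X) → ℕ → X}
    (hF : ∀ z, Related L z (F z)) : Continuous F := by
  refine continuous_pi fun j => hU.continuous_iff.2 ?_
  rintro _ ⟨k, rfl⟩
  refine isOpen_iff_mem_nhds.2 fun z hzk => ?_
  obtain ⟨t, ht, hz⟩ := hL.exists_branch z
  obtain ⟨n, hn⟩ := ht.exists_decides_right hsmall j k
  have mem_right {z'} (hz' : z' ∈ (t n).leftBox) : F z' j ∈ (t n).right j :=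
    mem_rightBox.1 (hL.mem_rightBox_of_related (hF z') (hz n).1 hz') j
  have right_subset : (t n).right j ⊆ U k :=
    hn.resolve_right fun h => h (mem_right (hz n).2) hzk
  exact mem_of_superset ((t n).isOpen_leftBox.mem_nhds (hz n).2) fun z' hz' =>
    right_subset (mem_right hz')

theorem exists_homeomorph [T1Space X] (hsmall : IsSmallnessScale G U small)
    (hU : IsTopologicalBasis (range U)) (hL : IsTree small U f g L) :
    ∃ F : (ℕ → X) ≃ₜ (ℕ → X), ∀ z w, F z = w ↔ Related L z w := by
  choose F hF using hL.exists_related hsmall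
  choose F' hF' using hL.swap.exists_related hsmall
  have related_F' (w : ℕ → X) : Related L (F' w) w := fun n =>
    let ⟨t, ht, hw, hz⟩ := hF' w n
    ⟨t.swap, ht, hz, hw⟩
  have related_swap (z : ℕ → X) : Related (fun n => BoxPair.swap ⁻¹' L n) (F z) z := fun n =>
    let ⟨t, ht, hz, hw⟩ := hF z n
    ⟨t.swap, ht, hw, hz⟩
  refine ⟨{
    toFun := F
    invFun := F'
    left_inv := fun z => hL.swap.related_unique hsmall hU (hF' (F z)) (related_swap z)
    right_inv := fun w => hL.related_unique hsmall hU (hF (F' w)) (related_F' w)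
    continuous_toFun := hL.continuous_of_related hsmall hU hF
    continuous_invFun := hL.swap.continuous_of_related hsmall hU hF' }, fun z w => ?_⟩
  exact ⟨fun h => h ▸ hF z, hL.related_unique hsmall hU (hF z)⟩

theorem exists_homeomorph_image_range_eq [T1Space X] (hsmall : IsSmallnessScale G U small)
    (hU : IsTopologicalBasis (range U)) (hL : IsTree small U f g L) :
    ∃ F : (ℕ → X) ≃ₜ (ℕ → X), F '' range f = range g := by
  obtain ⟨F, hF⟩ := hL.exists_homeomorph hsmall hU
  refine ⟨F, Subset.antisymm ?_ ?_⟩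
  · rintro _ ⟨_, ⟨k, rfl⟩, rfl⟩
    obtain ⟨m, hm⟩ := hL.exists_related_apply k
    exact ⟨m, ((hF _ _).2 hm).symm⟩
  · rintro _ ⟨m, rfl⟩
    obtain ⟨k, hk⟩ := hL.swap.exists_related_apply m
    exact ⟨f k, mem_range_self k, (hF _ _).2 fun n =>
      let ⟨t, ht, hgm, hfk⟩ := hk n
      ⟨t.swap, ht, hfk, hgm⟩⟩

end IsTree

/-- The pair of boxes in which both sides are the whole of `X^ω` and nothing is matched. -/
def whole (X : Type*) [TopologicalSpace X] [Nonempty X] : BoxPair X where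
  left _ := univ
  right _ := univ
  Matched _ _ := False
  isClopen_left _ := isClopen_univ
  isClopen_right _ := isClopen_univ
  nonempty_left _ := univ_nonempty
  nonempty_right _ := univ_nonempty
  left_eq_right := False.elim
  biUnique := ⟨fun _ _ _ h => h.elim, fun _ _ _ h => h.elim⟩
  eventually_free := .of_forall fun _ => ⟨rfl, rfl, fun _ => ⟨id, id⟩⟩

theorem exists_isTree_of_forall_partitions [Nonempty X]
    (h : ∀ n t, ∃ C, Partitions C t ∧ ∀ s ∈ C, IsChild small U f g n s t) :
    ∃ L, IsTree small U f g L := by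
  choose C hC hC_child using h
  let L : ℕ → Set (BoxPair X) := Nat.rec {whole X} fun n A => ⋃ t ∈ A, C n t
  refine ⟨L, fun n => ?_, fun n => ?_, fun n s hs => ?_⟩
  · induction n with
    | zero => exact pi_univ univ ▸ uniquelyCovers_singleton leftBox (whole X)
    | succ n ih =>
      exact ih.biUnion (fun t _ => (hC n t).left) fun t _ s hs =>
        (hC_child n t s hs).refines.leftBox_subset
  · induction n with
    | zero => exact pi_univ univ ▸ uniquelyCovers_singleton rightBox (whole X)
    | succ n ih =>
      exact ih.biUnion (fun t _ => (hC n t).right) fun t _ s hs =>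
        (hC_child n t s hs).refines.rightBox_subset
  · obtain ⟨t, ht, hst⟩ := mem_iUnion₂.1 hs
    exact ⟨t, ht, hC_child n t s hst⟩

theorem exists_isTree [TotallySeparatedSpace X] [Nonempty X] (hsmall : IsSmallnessScale G U small)
    (hG : Dense G) (hU : ∀ k, IsClopen (U k)) (hf : DenseRange f) (hg : DenseRange g)
    (hfG : ∀ k i, f k i ∈ G) (hgG : ∀ k i, g k i ∈ G) : ∃ L, IsTree small U f g L := by
  refine exists_isTree_of_forall_partitions fun n t => ?_
  have tracked : Tracked (f (firstIndex f t.leftBox)) (g (firstIndex g t.rightBox)) t :=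
    iff_of_true
      (apply_firstIndex_mem (hf.exists_mem_open t.isOpen_leftBox t.nonempty_leftBox))
      (apply_firstIndex_mem (hg.exists_mem_open t.swap.isOpen_leftBox t.swap.nonempty_leftBox))
  obtain ⟨C, hC, hC_child⟩ := canRefine_tracked_fullyResolved (hsmall.isSmallness n) hG hU
    tracked (hfG _) (hgG _) n
  exact ⟨C, hC, fun s hs => ⟨(hC_child s hs).1, (hC_child s hs).2.2, (hC_child s hs).2.1⟩⟩

end Limit

end BoxPair

section Completeness

variable {X Y : Type*} [TopologicalSpace X] [UniformSpace Y] {e : Y → X} {V : ℕ → Set (Y × Y)}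
  {U : ℕ → Set X}

theorem nonempty_iInter_of_frequently_prod_subset [CompleteSpace Y]
    (hV : (𝓤 Y).HasAntitoneBasis V) {S : ℕ → Set Y} (hS : ∀ n, IsClosed (S n))
    (hne : ∀ n, (S n).Nonempty) (hanti : Antitone S) (hfreq : ∃ᶠ n in atTop, S n ×ˢ S n ⊆ V n) :
    (⋂ n, S n).Nonempty := by
  choose y hy using hne
  have cauchySeq_y : CauchySeq y := by
    refine hV.toHasBasis.cauchySeq_iff.2 fun n _ => ?_
    obtain ⟨N, hnN, hN⟩ := frequently_atTop.1 hfreq n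
    exact ⟨N, fun k hk l hl => hV.antitone hnN (hN ⟨hanti hk (hy k), hanti hl (hy l)⟩)⟩
  obtain ⟨l, hl⟩ := cauchySeq_tendsto_of_complete cauchySeq_y
  exact ⟨l, mem_iInter.2 fun n => (hS n).mem_of_tendsto hl <|
    (eventually_ge_atTop n).mono fun k hk => hanti hk (hy k)⟩

/-- The notion of smallness for step `n`: the set `S` lies on one side of each of the first `n`
members of `U`, and its trace on the complete space `Y` is small of order `V n`. -/
def IsSmallAt (e : Y → X) (V : ℕ → Set (Y × Y)) (U : ℕ → Set X) (n : ℕ) (S : Set X) : Prop :=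
  (∀ k < n, Decides (U k) S) ∧ (e ⁻¹' S) ×ˢ (e ⁻¹' S) ⊆ V n

theorem eventually_smallSets_decides {U : Set X} (hU : IsClopen U) (x : X) :
    ∀ᶠ S in (𝓝 x).smallSets, Decides U S := by
  by_cases hx : x ∈ U
  · exact (eventually_smallSets_subset.2 (hU.isOpen.mem_nhds hx)).mono fun _ => Or.inl
  · exact (eventually_smallSets_subset.2 (hU.compl.isOpen.mem_nhds hx)).mono fun _ => Or.inr

theorem eventually_smallSets_preimage_prod_subset (he : IsInducing e) {V : Set (Y × Y)}
    (hV : V ∈ 𝓤 Y) (y : Y) :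
    ∀ᶠ S in (𝓝 (e y)).smallSets, (e ⁻¹' S) ×ˢ (e ⁻¹' S) ⊆ V := by
  have hV_nhds : V ∈ 𝓝 y ×ˢ 𝓝 y := by
    rw [← nhds_prod_eq]
    exact nhds_le_uniformity y hV
  obtain ⟨O, hO, hOV⟩ := mem_prod_same_iff.1 hV_nhds
  rw [he.nhds_eq_comap] at hO
  obtain ⟨W, hW, hWO⟩ := mem_comap.1 hO
  refine (eventually_smallSets_subset.2 hW).mono fun S hSW => ?_
  exact (prod_mono ((preimage_mono hSW).trans hWO) ((preimage_mono hSW).trans hWO)).trans hOV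

theorem isSmallnessScale_isSmallAt [CompleteSpace Y]
    (hX : IsTopologicalBasis {C : Set X | IsClopen C}) (he : IsInducing e)
    (he_dense : DenseRange e) (hV : (𝓤 Y).HasAntitoneBasis V) (hU : ∀ k, IsClopen (U k)) :
    IsSmallnessScale (range e) U (IsSmallAt e V U) where
  isSmallness n :=
    { antitone := fun S T hST hT => ⟨fun k hk => antitone_decides (U k) hST (hT.1 k hk),
        (prod_mono (preimage_mono hST) (preimage_mono hST)).trans hT.2⟩
      exists_isClopen := by
        rintro _ ⟨y, rfl⟩
        have eventually_small : ∀ᶠ S in (𝓝 (e y)).smallSets, IsSmallAt e V U n S :=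
          ((eventually_all_finite (finite_Iio n)).2 fun k _ =>
            eventually_smallSets_decides (hU k) (e y)).and
          (eventually_smallSets_preimage_prod_subset he (hV.mem n) y)
        obtain ⟨W, ⟨hW, hyW⟩, hW_small⟩ :=
          eventually_small.exists_mem_basis_of_smallSets hX.nhds_hasBasis
        exact ⟨W, hW, hyW, hW_small⟩ }
  decides hS hk := hS.1 _ hk
  nonempty_iInter S hS hne hanti hfreq := by
    obtain ⟨y, hy⟩ := nonempty_iInter_of_frequently_prod_subset hV
      (fun n => (hS n).isClosed.preimage he.continuous)
      (fun n => he_dense.exists_mem_open (hS n).isOpen (hne n))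
      (fun _ _ hmn => preimage_mono (hanti hmn)) (hfreq.mono fun _ => And.right)
    exact ⟨e y, mem_iInter.2 fun n => mem_iInter.1 hy n⟩

end Completeness

section Homeomorph

variable {X : Type*} [TopologicalSpace X]

theorem exists_seq_isClopen_isTopologicalBasis [SecondCountableTopology X] [Nonempty X]
    (hX : IsTopologicalBasis {C : Set X | IsClopen C}) :
    ∃ U : ℕ → Set X, (∀ k, IsClopen (U k)) ∧ IsTopologicalBasis (range U) := by
  obtain ⟨B, hB_clopen, hB_countable, hB⟩ := hX.exists_countable
  obtain ⟨x⟩ := ‹Nonempty X›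
  obtain ⟨W, hWB, -⟩ := hB.exists_subset_of_mem_open (mem_univ x) isOpen_univ
  obtain ⟨U, rfl⟩ := hB_countable.exists_eq_range ⟨W, hWB⟩
  exact ⟨U, fun k => hB_clopen (mem_range_self k), hB⟩

theorem exists_homeomorph_image_range_eq [T0Space X] [SecondCountableTopology X]
    (hX : IsTopologicalBasis {C : Set X | IsClopen C}) {G : Set X} [IsCompletelyMetrizableSpace G]
    {f g : ℕ → ℕ → X} (hf : DenseRange f) (hg : DenseRange g) (hfG : ∀ k i, f k i ∈ G)
    (hgG : ∀ k i, g k i ∈ G) : ∃ F : (ℕ → X) ≃ₜ (ℕ → X), F '' range f = range g := by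
  have := totallySeparatedSpace_of_t0_of_basis_clopen hX
  have : Nonempty X := ⟨f 0 0⟩
  let _ := upgradeIsCompletelyMetrizable G
  obtain ⟨U, hU, hU_basis⟩ := exists_seq_isClopen_isTopologicalBasis hX
  obtain ⟨V, hV⟩ := (𝓤 G).exists_antitone_basis
  have dense_G : Dense G :=
    ((surjective_eval 0).denseRange.comp hf (continuous_apply 0)).mono
      (range_subset_iff.2 fun k => hfG k 0)
  have hsmall : IsSmallnessScale G U (IsSmallAt ((↑) : G → X) V U) := by
    simpa only [Subtype.range_coe] using
      isSmallnessScale_isSmallAt hX .subtypeVal dense_G.denseRange_val hV hU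
  obtain ⟨L, hL⟩ := BoxPair.exists_isTree hsmall dense_G hU hf hg hfG hgG
  exact hL.exists_homeomorph_image_range_eq hsmall hU_basis

end Homeomorph

end CountableDenseHomogeneity

theorem ZeroDimensional.isTopologicalBasis_isClopen {X : Type*} [TopologicalSpace X]
    (h : ZeroDimensional X) : IsTopologicalBasis {C : Set X | IsClopen C} :=
  isTopologicalBasis_of_isOpen_of_nhds (fun _ hC => hC.isOpen) fun x U hx hU =>
    let ⟨C, hC, hxC, hCU⟩ := h x U hU hx
    ⟨C, hC, hxC, hCU⟩

/-- If `X` is a zero-dimensional countably controlled separable metrizable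
space, then `X^ω` is countable dense homogeneous. -/
theorem statement17 {X : Type*} [TopologicalSpace X] [TopologicalSpace.SeparableSpace X]
    [TopologicalSpace.MetrizableSpace X] (hzd : ZeroDimensional X)
    (hcc : CountablyControlled X) : IsCDH (ℕ → X) := by
  intro A B hA dense_A hB dense_B
  rcases isEmpty_or_nonempty X with _ | _
  · exact ⟨.refl _, Subsingleton.elim _ _⟩
  obtain ⟨f, rfl⟩ := hA.exists_eq_range dense_A.nonempty
  obtain ⟨g, rfl⟩ := hB.exists_eq_range dense_B.nonempty
  obtain ⟨G, hG, _⟩ := hcc (range (uncurry f) ∪ range (uncurry g))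
    ((countable_range _).union (countable_range _))
  let _ := metrizableSpaceMetric X
  have := UniformSpace.secondCountable_of_separable X
  exact CountableDenseHomogeneity.exists_homeomorph_image_range_eq hzd.isTopologicalBasis_isClopen
    dense_A dense_B (fun k i => hG (Or.inl ⟨(k, i), rfl⟩)) fun k i => hG (Or.inr ⟨(k, i), rfl⟩)
end
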